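/- arXiv:1109.3761 — 2 statements merged into one kernel-verified Lean document; each statement's English description precedes it below -/
import Mathlib

section
/- Let A be a piecewise-Koszul algebra with period p and jump degree d, and let 0 → K → M → N → 0 be a short exact sequence of finitely generated graded A-modules. If K and M are piecewise-Koszul modules and both K and M are generated in the same degree s, then N ≅ M/K is a piecewise-Koszul module. -/
noncomputable section

/-- The jump function `δ^d_p(n) = ((n − (n mod p))/p)·d + (n mod p)`. -/
def jump (d p n : ℕ) : ℕ := (n - n % p) / p * d + n % p

/-- A positively graded `F`-algebra `A = ⊕_{i≥0} A_i`. -/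
structure GradedAlg (F : Type) [Field F] where
  A : Type
  [ringA : Ring A]
  [algA : Algebra F A]
  grading : ℕ → Submodule F A
  [graded : GradedAlgebra grading]

attribute [instance] GradedAlg.ringA GradedAlg.algA GradedAlg.graded

namespace GradedAlg

variable {F : Type} [Field F] (𝒜 : GradedAlg F)

/-- The graded Jacobson radical `J = ⊕_{i≥1} A_i`, i.e. the irrelevant ideal. -/
def jideal : Ideal 𝒜.A := (HomogeneousIdeal.irrelevant 𝒜.grading).toIdeal

/-- The standing assumptions: `A_0` is a semisimple Artin algebra, `A` is generated in
degrees 0 and 1 (`A_i · A_j = A_{i+j}`), and `A_1` is finite dimensional over `F`. -/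
structure Standing : Prop where
  semisimple : IsSemisimpleRing ↥(𝒜.grading 0)
  artinian : IsArtinianRing ↥(𝒜.grading 0)
  gen01 : ∀ i j : ℕ, 𝒜.grading i * 𝒜.grading j = 𝒜.grading (i + j)
  findim : FiniteDimensional F ↥(𝒜.grading 1)

/-- A (ℤ-)graded module over the graded algebra `𝒜`. -/
structure GMod where
  M : Type
  [acg : AddCommGroup M]
  [modF : Module F M]
  [modA : Module 𝒜.A M]
  [tower : IsScalarTower F 𝒜.A M]
  [scomm : SMulCommClass 𝒜.A F M]
  grading : ℤ → Submodule F M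
  sup_eq_top : (⨆ j : ℤ, grading j) = ⊤
  indep : iSupIndep grading
  smul_mem : ∀ {i : ℕ} {j : ℤ} {a : 𝒜.A} {m : M},
    a ∈ 𝒜.grading i → m ∈ grading j → a • m ∈ grading ((i : ℤ) + j)

attribute [instance] GMod.acg GMod.modF GMod.modA GMod.tower GMod.scomm

variable {𝒜}

/-- A degree-zero morphism of graded modules. -/
structure GHom (M N : 𝒜.GMod) where
  lin : M.M →ₗ[𝒜.A] N.M
  grad : ∀ (j : ℤ) (x : M.M), x ∈ M.grading j → lin x ∈ N.grading j

/-- A graded module is generated in degree `s` if `A · M_s = M`. -/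
def GMod.GenInDeg (M : 𝒜.GMod) (s : ℤ) : Prop :=
  Submodule.span 𝒜.A (M.grading s : Set M.M) = ⊤

/-- `T` is the trivial graded module `A_0 = A/J`, concentrated in degree `0`. -/
def IsTrivialGMod (T : 𝒜.GMod) : Prop :=
  (∀ j : ℤ, j ≠ 0 → T.grading j = ⊥) ∧
    Nonempty (T.M ≃ₗ[𝒜.A] (𝒜.A ⧸ 𝒜.jideal))

/-- A minimal graded projective resolution
`⋯ → P_{n+1} → P_n → ⋯ → P_0 → M → 0` of the graded module `M`,
with finitely generated terms. -/
structure MinRes (M : 𝒜.GMod) where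
  P : ℕ → 𝒜.GMod
  d : ∀ n : ℕ, GHom (P (n + 1)) (P n)
  aug : GHom (P 0) M
  fg : ∀ n, Module.Finite 𝒜.A (P n).M
  projective : ∀ n, Module.Projective 𝒜.A (P n).M
  aug_surj : Function.Surjective aug.lin
  exact_aug : LinearMap.range (d 0).lin = LinearMap.ker aug.lin
  exact : ∀ n, LinearMap.range (d (n + 1)).lin = LinearMap.ker (d n).lin
  minimal : ∀ n, LinearMap.range (d n).lin ≤ 𝒜.jideal • (⊤ : Submodule 𝒜.A (P n).M)

variable (𝒜)

/-- `M` is a piecewise-Koszul module (period `p`, jump degree `d`, shift `s`):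
it has a minimal graded projective resolution with `P_n` generated in degree `δ^d_p(n) + s`. -/
def IsPKMod (p d : ℕ) (s : ℤ) (M : 𝒜.GMod) : Prop :=
  ∃ R : MinRes M, ∀ n : ℕ, (R.P n).GenInDeg ((jump d p n : ℤ) + s)

/-- `A` is a piecewise-Koszul algebra (period `p`, jump degree `d`): the trivial module `T`
admits a minimal graded projective resolution with `P_n` generated in degree `δ^d_p(n)`. -/
def IsPKAlg (p d : ℕ) (T : 𝒜.GMod) : Prop := IsPKMod 𝒜 p d 0 T

/-- A Koszul module: a minimal graded projective resolution with `P_n` generated in degree `n`. -/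
def IsKoszulMod (M : 𝒜.GMod) : Prop :=
  ∃ R : MinRes M, ∀ n : ℕ, (R.P n).GenInDeg (n : ℤ)

variable {𝒜}

section Ext

variable (T : 𝒜.GMod) {M : 𝒜.GMod}

/-- The space of `A`-linear maps `P_n → T` (cochains). -/
abbrev HomSp (R : MinRes M) (n : ℕ) := (R.P n).M →ₗ[𝒜.A] T.M

/-- Precomposition, as an `F`-linear map on cochains. -/
def precompF {M₁ M₂ : 𝒜.GMod} (g : M₁.M →ₗ[𝒜.A] M₂.M) :
    (M₂.M →ₗ[𝒜.A] T.M) →ₗ[F] (M₁.M →ₗ[𝒜.A] T.M) where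
  toFun f := f ∘ₗ g
  map_add' f₁ f₂ := by ext x; simp
  map_smul' c f := by ext x; simp

/-- Cocycles: maps `P_n → T` vanishing on the image of `P_{n+1}`. -/
def cocyc (R : MinRes M) (n : ℕ) : Submodule F (HomSp T R n) :=
  LinearMap.ker (precompF T (R.d n).lin)

/-- Coboundaries: maps `P_n → T` factoring through `d_{n-1}`. -/
def cobound (R : MinRes M) : (n : ℕ) → Submodule F (HomSp T R n)
  | 0 => ⊥
  | n + 1 => LinearMap.range (precompF T (R.d n).lin)

/-- The coboundaries, viewed inside the cocycles. -/
def extRel (R : MinRes M) (n : ℕ) : Submodule F ↥(cocyc T R n) :=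
  (cobound T R n).comap (cocyc T R n).subtype

/-- `Ext^n_A(M, T)`, computed from the resolution `R` of `M`. -/
abbrev ExtQ (R : MinRes M) (n : ℕ) := ↥(cocyc T R n) ⧸ extRel T R n

/-- The class in `Ext^n_A(M,T)` of a cocycle. -/
def extCls {R : MinRes M} {n : ℕ} {f : HomSp T R n} (hf : f ∈ cocyc T R n) :
    ExtQ T R n :=
  Submodule.Quotient.mk ⟨f, hf⟩

/-- Cochains of shift-degree `j`: maps `P_n → T` vanishing on every `(P_n)_i` with `i ≠ j`. -/
def homDeg (R : MinRes M) (n : ℕ) (j : ℤ) : Submodule F (HomSp T R n) where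
  carrier := {f | ∀ i : ℤ, i ≠ j → ∀ x ∈ (R.P n).grading i, f x = 0}
  add_mem' := fun hf hg i hi x hx => by
    simp only [LinearMap.add_apply, hf i hi x hx, hg i hi x hx, add_zero]
  zero_mem' := fun i hi x hx => rfl
  smul_mem' := fun c f hf i hi x hx => by
    simp only [LinearMap.smul_apply, hf i hi x hx, smul_zero]

/-- The shift-degree `j` component `Ext^n_A(M,T)_j`. -/
def extComp (R : MinRes M) (n : ℕ) (j : ℤ) : Submodule F (ExtQ T R n) :=
  Submodule.map (extRel T R n).mkQ ((homDeg T R n j).comap (cocyc T R n).subtype)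

/-- Transport `Ext` along an equality of cohomological degrees. -/
def extCast (R : MinRes M) {a b : ℕ} (h : a = b) : ExtQ T R a ≃ₗ[F] ExtQ T R b :=
  h ▸ LinearEquiv.refl F (ExtQ T R a)

/-- A chain map lifting of a cochain `g : P_j → T` over the resolutions `RM` of `M`
and `RT` of `T`. -/
structure ChainLift (RT : MinRes T) (RM : MinRes M) (j : ℕ)
    (g : (RM.P j).M →ₗ[𝒜.A] T.M) where
  ℓ : ∀ m k : ℕ, m = k + j → ((RM.P m).M →ₗ[𝒜.A] (RT.P k).M)
  comm_aug : RT.aug.lin ∘ₗ ℓ j 0 (by omega) = g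
  comm : ∀ k : ℕ, (RT.d k).lin ∘ₗ ℓ (k + j + 1) (k + 1) (by omega) =
    ℓ (k + j) k rfl ∘ₗ (RM.d (k + j)).lin

/-- `μ` is the (bigraded family of) Yoneda product(s)
`Ext^i(T,T) ⊗ Ext^j(M,T) → Ext^{i+j}(M,T)`: it is computed by composing a cocycle
`f : P_i → T` with a chain lifting of a cocycle `g : Q_j → T`. -/
def IsYonedaMul (RT : MinRes T) (RM : MinRes M)
    (μ : ∀ i j : ℕ, ExtQ T RT i →ₗ[F] ExtQ T RM j →ₗ[F] ExtQ T RM (i + j)) : Prop :=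
  ∀ (i j : ℕ) (f : HomSp T RT i) (hf : f ∈ cocyc T RT i)
    (g : HomSp T RM j) (hg : g ∈ cocyc T RM j)
    (L : ChainLift T RT RM j g)
    (hc : f ∘ₗ L.ℓ (i + j) i (by omega) ∈ cocyc T RM (i + j)),
    μ i j (extCls T hf) (extCls T hg) = extCls T hc

/-- `E(A) = Ext^*_A(A_0,A_0)` is generated in the ext-degrees belonging to `S`. -/
def ExtGenIn (RT : MinRes T)
    (μ : ∀ i j : ℕ, ExtQ T RT i →ₗ[F] ExtQ T RT j →ₗ[F] ExtQ T RT (i + j))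
    (S : Set ℕ) : Prop :=
  ∀ W : (n : ℕ) → Submodule F (ExtQ T RT n),
    (∀ n ∈ S, W n = ⊤) →
    (∀ (i j : ℕ) (x : ExtQ T RT i) (y : ExtQ T RT j),
      x ∈ W i → y ∈ W j → μ i j x y ∈ W (i + j)) →
    ∀ n, W n = ⊤

/-- `E(M) = Ext^*_A(M,A_0)` is generated in degree `0` as a graded `E(A)`-module. -/
def ExtModGenInZero (RT : MinRes T) (RM : MinRes M)
    (μ : ∀ i j : ℕ, ExtQ T RT i →ₗ[F] ExtQ T RM j →ₗ[F] ExtQ T RM (i + j)) : Prop :=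
  ∀ W : (n : ℕ) → Submodule F (ExtQ T RM n),
    W 0 = ⊤ →
    (∀ (i j : ℕ) (x : ExtQ T RT i) (y : ExtQ T RM j),
      y ∈ W j → μ i j x y ∈ W (i + j)) →
    ∀ n, W n = ⊤

end Ext

/-- `JM` is (a graded module isomorphic to) the submodule `J·M` of `M`. -/
def IsJM (M JM : 𝒜.GMod) : Prop :=
  ∃ e : JM.M ≃ₗ[𝒜.A] ↥(𝒜.jideal • (⊤ : Submodule 𝒜.A M.M)),
    ∀ (j : ℤ) (x : JM.M), x ∈ JM.grading j ↔ ((e x : M.M) ∈ M.grading j)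

/-- `Q` is (a graded module isomorphic to) the quotient `M/JM`. -/
def IsQuotJM (M Q : 𝒜.GMod) : Prop :=
  ∃ e : Q.M ≃ₗ[𝒜.A] (M.M ⧸ (𝒜.jideal • (⊤ : Submodule 𝒜.A M.M))),
    ∀ j : ℤ, Q.grading j = Submodule.map
      ((e.symm.toLinearMap ∘ₗ (𝒜.jideal • (⊤ : Submodule 𝒜.A M.M)).mkQ).restrictScalars F)
      (M.grading j)

/-- `W` is (isomorphic to) the `n`-th syzygy `Ω^n(M)` of `M` in the minimal graded
projective resolution `R`. -/
def IsSyzygy {M : 𝒜.GMod} (R : MinRes M) : ℕ → 𝒜.GMod → Prop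
  | 0, W => ∃ e : W.M ≃ₗ[𝒜.A] M.M,
      ∀ (j : ℤ) (x : W.M), x ∈ W.grading j ↔ e x ∈ M.grading j
  | 1, W => ∃ e : W.M ≃ₗ[𝒜.A] ↥(LinearMap.ker R.aug.lin),
      ∀ (j : ℤ) (x : W.M), x ∈ W.grading j ↔ ((e x : (R.P 0).M) ∈ (R.P 0).grading j)
  | (n + 2), W => ∃ e : W.M ≃ₗ[𝒜.A] ↥(LinearMap.ker (R.d n).lin),
      ∀ (j : ℤ) (x : W.M), x ∈ W.grading j ↔ ((e x : (R.P (n + 1)).M) ∈ (R.P (n + 1)).grading j)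

end GradedAlg

/-!
Let `P → K` and `Q → M` be minimal covers generated in the same degree `s`, and lift `K → M` to
`φ : P → Q`. On `P_s` this lift is injective, because `P_s` meets `J P ⊇ ker (P → K)` trivially.
Hence `P / J P → Q / J Q` is injective, and semisimplicity of `A_0` splits it; lifting the
splitting gives a retraction of `φ`. The complement of `P` in `Q` is then a minimal cover of `N`
generated in degree `s`, and by the 3 × 3 lemma its first syzygy is again the cokernel of an
injection between the first syzygies of `K` and `M`. Iterating yields the resolution of `N`.
-/

namespace GradedAlg

variable {F : Type} [Field F] {𝒜 : GradedAlg F}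

/-! ### Homogeneous components -/

namespace GMod

instance decomposition (M : 𝒜.GMod) : DirectSum.Decomposition M.grading :=
  (DirectSum.isInternal_submodule_of_iSupIndep_of_iSup_eq_top M.indep
    M.sup_eq_top).chooseDecomposition

/-- The projection of a graded module onto its component of degree `j`, as an endomorphism of the
whole module. -/
def proj (M : 𝒜.GMod) (j : ℤ) : M.M →ₗ[F] M.M :=
  (M.grading j).subtype ∘ₗ DirectSum.component F ℤ (fun k => M.grading k) j ∘ₗ
    (DirectSum.decomposeLinearEquiv M.grading).toLinearMap

variable (M : 𝒜.GMod)

theorem proj_of_mem {j : ℤ} {x : M.M} (hx : x ∈ M.grading j) : M.proj j x = x :=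
  DirectSum.decompose_of_mem_same M.grading hx

theorem proj_of_mem_ne {j k : ℤ} {x : M.M} (hx : x ∈ M.grading k) (hkj : k ≠ j) :
    M.proj j x = 0 :=
  DirectSum.decompose_of_mem_ne M.grading hx hkj

theorem proj_mem (j : ℤ) (x : M.M) : M.proj j x ∈ M.grading j :=
  SetLike.coe_mem _

theorem mem_iSup_grading_of_proj_mem (W : Submodule 𝒜.A M.M) (hW : ∀ j, ∀ x ∈ W, M.proj j x ∈ W)
    (x : W) : x ∈ ⨆ j, (M.grading j).comap (W.subtype.restrictScalars F) := by
  classical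
  have hx : x = ∑ j ∈ (DirectSum.decompose M.grading (x : M.M)).support,
      (⟨M.proj j x, hW j x x.2⟩ : W) :=
    Subtype.ext <| by
      rw [AddSubmonoidClass.coe_finsetSum]
      exact (DirectSum.sum_support_decompose M.grading (x : M.M)).symm
  rw [hx]
  exact Submodule.sum_mem _ fun j _ => Submodule.mem_iSup_of_mem j (M.proj_mem j x)

theorem iSupIndep_comap_grading (W : Submodule 𝒜.A M.M) :
    iSupIndep fun j => (M.grading j).comap (W.subtype.restrictScalars F) := fun j => by
  rw [Submodule.disjoint_def]
  intro x hx hx'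
  refine Subtype.ext (Submodule.disjoint_def.1 (M.indep j) x hx ?_)
  have hle : (⨆ k, ⨆ (_ : k ≠ j), (M.grading k).comap (W.subtype.restrictScalars F)) ≤
      (⨆ k, ⨆ (_ : k ≠ j), M.grading k).comap (W.subtype.restrictScalars F) :=
    iSup₂_le fun k hk => Submodule.comap_mono (le_iSup₂_of_le k hk le_rfl)
  exact hle hx'

theorem proj_smul {i : ℕ} {a : 𝒜.A} (ha : a ∈ 𝒜.grading i) (j : ℤ) (x : M.M) :
    M.proj (i + j) (a • x) = a • M.proj j x := by
  induction x using DirectSum.Decomposition.inductionOn M.grading with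
  | zero => simp only [smul_zero, map_zero]
  | @homogeneous k x =>
    have hax := M.smul_mem ha x.2
    obtain rfl | hkj := eq_or_ne k j
    · rw [M.proj_of_mem x.2, M.proj_of_mem hax]
    · rw [M.proj_of_mem_ne x.2 hkj, M.proj_of_mem_ne hax (by simpa using hkj), smul_zero]
  | add x y hx hy => simp only [smul_add, map_add, hx, hy]

end GMod

namespace GHom

variable {L M N : 𝒜.GMod}

theorem map_proj (f : GHom M N) (j : ℤ) (x : M.M) : f.lin (M.proj j x) = N.proj j (f.lin x) := by
  induction x using DirectSum.Decomposition.inductionOn M.grading with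
  | zero => simp only [map_zero]
  | @homogeneous k x =>
    have hfx := f.grad k x x.2
    obtain rfl | hkj := eq_or_ne k j
    · rw [M.proj_of_mem x.2, N.proj_of_mem hfx]
    · rw [M.proj_of_mem_ne x.2 hkj, N.proj_of_mem_ne hfx hkj, map_zero]
  | add x y hx hy => simp only [map_add, hx, hy]

/-- Composition of morphisms of graded modules. -/
def comp (g : GHom M N) (f : GHom L M) : GHom L N where
  lin := g.lin ∘ₗ f.lin
  grad j x hx := g.grad j _ (f.grad j x hx)

/-- The morphism given by an `F`-linear map of degree zero which is `A`-linear on homogeneous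
elements. -/
def ofHomogeneous (T : M.M →ₗ[F] N.M) (hT : ∀ j, ∀ x ∈ M.grading j, T x ∈ N.grading j)
    (hsmul : ∀ i, ∀ a ∈ 𝒜.grading i, ∀ j, ∀ x ∈ M.grading j, T (a • x) = a • T x) :
    GHom M N where
  lin :=
    { toFun := T
      map_add' := T.map_add
      map_smul' := fun a x => by
        rw [RingHom.id_apply]
        induction a using DirectSum.Decomposition.inductionOn 𝒜.grading with
        | zero => simp only [zero_smul, map_zero]
        | homogeneous a =>
          induction x using DirectSum.Decomposition.inductionOn M.grading with
          | zero => simp only [smul_zero, map_zero]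
          | homogeneous x => exact hsmul _ a a.2 _ x x.2
          | add x y hx hy => simp only [smul_add, map_add, hx, hy]
        | add a b ha hb => simp only [add_smul, map_add, ha, hb] }
  grad := hT

/-- The degree-zero part of an arbitrary `A`-linear map `h` between graded modules: on `M_j` it is
`h` followed by the projection onto `N_j`. -/
def degreeZeroPart (h : M.M →ₗ[𝒜.A] N.M) : GHom M N :=
  let T : M.M →ₗ[F] N.M :=
    DirectSum.toModule F ℤ N.M (fun j => N.proj j ∘ₗ h.restrictScalars F ∘ₗ
      (M.grading j).subtype) ∘ₗ (DirectSum.decomposeLinearEquiv M.grading).toLinearMap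
  have hT : ∀ j, ∀ x ∈ M.grading j, T x = N.proj j (h x) := fun j x hx => by
    lift x to M.grading j using hx
    simp [T]
  ofHomogeneous T (fun j x hx => hT j x hx ▸ N.proj_mem j (h x)) fun i a ha j x hx => by
    rw [hT _ _ (M.smul_mem ha hx), hT j x hx, map_smul, N.proj_smul ha]

theorem degreeZeroPart_of_mem (h : M.M →ₗ[𝒜.A] N.M) {j : ℤ} {x : M.M} (hx : x ∈ M.grading j) :
    (degreeZeroPart h).lin x = N.proj j (h x) := by
  lift x to M.grading j using hx
  simp [degreeZeroPart, ofHomogeneous]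

theorem exists_lift_of_projective [Module.Projective 𝒜.A L.M] (q : GHom M N)
    (hq : Function.Surjective q.lin) (f : GHom L N) :
    ∃ h : GHom L M, ∀ x, q.lin (h.lin x) = f.lin x := by
  obtain ⟨h, hh⟩ := Module.projective_lifting_property q.lin f.lin hq
  refine ⟨degreeZeroPart h, fun x => ?_⟩
  induction x using DirectSum.Decomposition.inductionOn L.grading with
  | zero => simp only [map_zero]
  | @homogeneous j x =>
    calc q.lin ((degreeZeroPart h).lin x)
        = N.proj j (q.lin (h x)) := by rw [degreeZeroPart_of_mem h x.2, q.map_proj]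
      _ = N.proj j (f.lin x) := by rw [← hh, LinearMap.comp_apply]
      _ = f.lin x := N.proj_of_mem (f.grad j x x.2)
  | add x y hx hy => simp only [map_add, hx, hy]

/-! ### Kernels and short exact sequences -/

/-- The kernel of a morphism, as a graded module. -/
def ker (f : GHom M N) : 𝒜.GMod where
  M := LinearMap.ker f.lin
  grading j := (M.grading j).comap ((LinearMap.ker f.lin).subtype.restrictScalars F)
  sup_eq_top := eq_top_iff.2 fun x _ => M.mem_iSup_grading_of_proj_mem _
    (fun j x hx => by rw [LinearMap.mem_ker] at hx ⊢; rw [f.map_proj, hx, map_zero]) x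
  indep := M.iSupIndep_comap_grading _
  smul_mem ha hx := M.smul_mem ha hx

/-- The inclusion of the kernel. -/
def kerSubtype (f : GHom M N) : GHom f.ker M where
  lin := (LinearMap.ker f.lin).subtype
  grad _ _ hx := hx

theorem kerSubtype_injective (f : GHom M N) : Function.Injective f.kerSubtype.lin :=
  Subtype.val_injective

theorem map_kerSubtype (f : GHom M N) (x : f.ker.M) : f.lin (f.kerSubtype.lin x) = 0 :=
  LinearMap.mem_ker.1 (Subtype.property x)

/-- The factorization through `f.ker` of a morphism killed by `f`. -/
def kerLift (f : GHom M N) (h : GHom L M) (hfh : ∀ x, f.lin (h.lin x) = 0) : GHom L f.ker where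
  lin := h.lin.codRestrict (LinearMap.ker f.lin) hfh
  grad := h.grad

/-- The map induced on kernels by a commutative square with vertical sides `a` and `b`. -/
def kerMap {P Q : 𝒜.GMod} (a : GHom P M) (b : GHom Q N) (φ : GHom P Q) (f : GHom M N)
    (hφ : ∀ x, b.lin (φ.lin x) = f.lin (a.lin x)) : GHom a.ker b.ker :=
  b.kerLift (φ.comp a.kerSubtype) fun x =>
    show b.lin (φ.lin (a.kerSubtype.lin x)) = 0 by rw [hφ, a.map_kerSubtype, map_zero]

end GHom

/-- Exactness of `0 → K → M → N → 0`. -/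
structure IsShortExact {K M N : 𝒜.GMod} (f : GHom K M) (g : GHom M N) : Prop where
  injective : Function.Injective f.lin
  exact : Function.Exact f.lin g.lin
  surjective : Function.Surjective g.lin

theorem GHom.isShortExact_kerSubtype {M N : 𝒜.GMod} (f : GHom M N)
    (hf : Function.Surjective f.lin) : IsShortExact f.kerSubtype f where
  injective := f.kerSubtype_injective
  exact := LinearMap.exact_subtype_ker_map f.lin
  surjective := hf

section Retraction

variable {P Q : 𝒜.GMod} (φ : GHom P Q) (ψ : GHom Q P) (hψφ : ∀ x, ψ.lin (φ.lin x) = x)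

/-- The projection `x ↦ x - φ (ψ x)` onto `ker ψ`, for a retraction `ψ` of `φ`. -/
def GHom.projKerRetraction : GHom Q ψ.ker :=
  ψ.kerLift ⟨LinearMap.id - φ.lin ∘ₗ ψ.lin, fun j x hx =>
    sub_mem hx (φ.grad j _ (ψ.grad j x hx))⟩ fun x => by simp [hψφ]

theorem GHom.kerSubtype_projKerRetraction (x : Q.M) :
    ψ.kerSubtype.lin ((projKerRetraction φ ψ hψφ).lin x) = x - φ.lin (ψ.lin x) :=
  rfl

theorem GHom.projKerRetraction_kerSubtype (z : ψ.ker.M) :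
    (projKerRetraction φ ψ hψφ).lin (ψ.kerSubtype.lin z) = z :=
  ψ.kerSubtype_injective <| by
    rw [kerSubtype_projKerRetraction, ψ.map_kerSubtype, map_zero, sub_zero]

theorem GHom.isShortExact_projKerRetraction : IsShortExact φ (projKerRetraction φ ψ hψφ) where
  injective := Function.LeftInverse.injective hψφ
  exact x := by
    rw [← map_eq_zero_iff _ ψ.kerSubtype_injective, kerSubtype_projKerRetraction]
    refine ⟨fun hx => ⟨ψ.lin x, (sub_eq_zero.1 hx).symm⟩, ?_⟩
    rintro ⟨y, rfl⟩
    rw [hψφ, sub_self]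
  surjective z := ⟨_, projKerRetraction_kerSubtype φ ψ hψφ z⟩

end Retraction

namespace IsShortExact

variable {K M N P Q R : 𝒜.GMod} {f : GHom K M} {g : GHom M N} {φ : GHom P Q} {π : GHom Q R}
  {a : GHom P K} {b : GHom Q M} {c : GHom R N}

theorem map_ker (hφπ : IsShortExact φ π) (hfg : IsShortExact f g)
    (hφ : ∀ x, b.lin (φ.lin x) = f.lin (a.lin x)) (hπ : ∀ x, c.lin (π.lin x) = g.lin (b.lin x))
    (ha : Function.Surjective a.lin) :
    (LinearMap.ker b.lin).map π.lin = LinearMap.ker c.lin := by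
  refine le_antisymm (Submodule.map_le_iff_le_comap.2 fun y hy => ?_) fun x hx => ?_
  · rw [LinearMap.mem_ker] at hy
    rw [Submodule.mem_comap, LinearMap.mem_ker, hπ, hy, map_zero]
  · obtain ⟨y, rfl⟩ := hφπ.surjective x
    rw [LinearMap.mem_ker, hπ] at hx
    obtain ⟨k, hk⟩ := (hfg.exact _).1 hx
    obtain ⟨z, rfl⟩ := ha k
    refine ⟨y - φ.lin z, ?_, ?_⟩
    · rw [SetLike.mem_coe, LinearMap.mem_ker, map_sub, hφ, hk, sub_self]
    · rw [map_sub, hφπ.exact.apply_apply_eq_zero, sub_zero]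

theorem kerMap (hφπ : IsShortExact φ π) (hfg : IsShortExact f g)
    (hφ : ∀ x, b.lin (φ.lin x) = f.lin (a.lin x)) (hπ : ∀ x, c.lin (π.lin x) = g.lin (b.lin x))
    (ha : Function.Surjective a.lin) :
    IsShortExact (GHom.kerMap a b φ f hφ) (GHom.kerMap b c π g hπ) where
  injective x y hxy := Subtype.ext (hφπ.injective (congrArg Subtype.val hxy))
  exact y := by
    refine ⟨fun hy => ?_, ?_⟩
    · obtain ⟨z, hz⟩ := (hφπ.exact (b.kerSubtype.lin y)).1 (congrArg Subtype.val hy)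
      have haz : a.lin z = 0 := hfg.injective <| by
        rw [← hφ, hz, b.map_kerSubtype, map_zero]
      exact ⟨⟨z, haz⟩, Subtype.ext hz⟩
    · rintro ⟨z, rfl⟩
      exact Subtype.ext (hφπ.exact.apply_apply_eq_zero _)
  surjective x := by
    obtain ⟨y, hy, hyx⟩ := (hφπ.map_ker hfg hφ hπ ha).ge x.2
    exact ⟨⟨y, hy⟩, Subtype.ext hyx⟩

end IsShortExact

/-! ### The top `M / JM` of a graded module -/

theorem mem_jideal_iff (a : 𝒜.A) : a ∈ 𝒜.jideal ↔ GradedRing.projZeroRingHom 𝒜.grading a = 0 :=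
  Iff.rfl

instance isTwoSided_jideal : 𝒜.jideal.IsTwoSided :=
  inferInstanceAs (RingHom.ker (GradedRing.projZeroRingHom 𝒜.grading)).IsTwoSided

theorem sub_projZeroRingHom_mem_jideal (a : 𝒜.A) :
    a - GradedRing.projZeroRingHom 𝒜.grading a ∈ 𝒜.jideal := by
  have hidem : GradedRing.projZeroRingHom 𝒜.grading (GradedRing.projZeroRingHom 𝒜.grading a) =
      GradedRing.projZeroRingHom 𝒜.grading a :=
    DirectSum.decompose_of_mem_same _ (SetLike.coe_mem _)
  rw [mem_jideal_iff, map_sub, hidem, sub_self]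

instance isSemisimpleRing_quotient_jideal [IsSemisimpleRing (𝒜.grading 0)] :
    IsSemisimpleRing (𝒜.A ⧸ 𝒜.jideal) := by
  let q : 𝒜.grading 0 →+* 𝒜.A ⧸ 𝒜.jideal :=
    (Ideal.Quotient.mk 𝒜.jideal).comp (SetLike.GradeZero.subring 𝒜.grading).subtype
  refine q.isSemisimpleRing_of_surjective fun y => ?_
  obtain ⟨a, rfl⟩ := Ideal.Quotient.mk_surjective y
  exact ⟨GradedRing.projZeroRingHom' 𝒜.grading a,
    (Ideal.Quotient.eq.2 (sub_projZeroRingHom_mem_jideal a)).symm⟩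

namespace GMod

/-- The graded radical `JM` of `M`. -/
abbrev radical (M : 𝒜.GMod) : Submodule 𝒜.A M.M :=
  𝒜.jideal • ⊤

instance isSemisimpleModule_quotient_radical [IsSemisimpleRing (𝒜.grading 0)] (M : 𝒜.GMod) :
    IsSemisimpleModule 𝒜.A (M.M ⧸ M.radical) :=
  (Module.isTorsionBySet_quotient_ideal_smul M.M 𝒜.jideal).isSemisimpleModule_iff.1 inferInstance

namespace GenInDeg

variable {M N : 𝒜.GMod} {s : ℤ}

theorem linearMap_ext (hM : M.GenInDeg s) {h h' : M.M →ₗ[𝒜.A] N.M}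
    (hh : ∀ x ∈ M.grading s, h x = h' x) : h = h' :=
  LinearMap.ext_on hM hh

theorem of_surjective (hM : M.GenInDeg s) (f : GHom M N) (hf : Function.Surjective f.lin) :
    N.GenInDeg s := by
  have himage : f.lin '' M.grading s ⊆ N.grading s := by
    rintro _ ⟨x, hx, rfl⟩
    exact f.grad s x hx
  refine eq_top_iff.2 (le_trans (ge_of_eq ?_) (Submodule.span_mono himage))
  rw [← Submodule.map_span, hM, Submodule.map_top, LinearMap.range_eq_top.2 hf]

theorem proj_smul (hM : M.GenInDeg s) (a : 𝒜.A) (x : M.M) :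
    M.proj s (a • x) = GradedRing.projZeroRingHom 𝒜.grading a • M.proj s x := by
  have hx : x ∈ Submodule.span 𝒜.A (M.grading s : Set M.M) := hM ▸ Submodule.mem_top
  induction hx using Submodule.span_induction generalizing a with
  | mem x hx =>
    induction a using DirectSum.Decomposition.inductionOn 𝒜.grading with
    | zero => simp only [zero_smul, map_zero]
    | @homogeneous i a =>
      have hax := M.smul_mem a.2 hx
      rw [M.proj_of_mem hx, GradedRing.projZeroRingHom_apply]
      obtain rfl | hi := eq_or_ne i 0
      · rw [DirectSum.decompose_of_mem_same _ a.2, M.proj_of_mem (by simpa using hax)]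
      · rw [DirectSum.decompose_of_mem_ne _ a.2 hi, zero_smul,
          M.proj_of_mem_ne hax (by simpa using hi)]
    | add a b ha hb => simp only [add_smul, map_add, ha, hb]
  | zero => simp only [smul_zero, map_zero]
  | add x y _ _ hx hy => simp only [smul_add, map_add, hx, hy]
  | smul b x _ hx => rw [smul_smul, hx, hx, map_mul, mul_smul]

theorem sub_proj_mem_radical (hM : M.GenInDeg s) (x : M.M) : x - M.proj s x ∈ M.radical := by
  have hx : x ∈ Submodule.span 𝒜.A (M.grading s : Set M.M) := hM ▸ Submodule.mem_top
  induction hx using Submodule.span_induction with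
  | mem x hx => rw [M.proj_of_mem hx, sub_self]; exact zero_mem _
  | zero => rw [map_zero, sub_zero]; exact zero_mem _
  | add x y _ _ hx hy => rw [map_add, add_sub_add_comm]; exact add_mem hx hy
  | smul a x _ hx =>
    set a₀ := GradedRing.projZeroRingHom 𝒜.grading a
    have hsplit : a • x - M.proj s (a • x) = (a - a₀) • x + a₀ • (x - M.proj s x) := by
      rw [hM.proj_smul, sub_smul, smul_sub, sub_add_sub_cancel]
    rw [hsplit]
    exact add_mem (Submodule.smul_mem_smul (sub_projZeroRingHom_mem_jideal a) Submodule.mem_top)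
      (Submodule.smul_mem _ _ hx)

theorem mem_radical_iff (hM : M.GenInDeg s) {x : M.M} : x ∈ M.radical ↔ M.proj s x = 0 := by
  refine ⟨fun hx => ?_, fun hx => ?_⟩
  · induction hx using Submodule.smul_induction_on' with
    | smul a ha y _ => rw [hM.proj_smul, (mem_jideal_iff a).1 ha, zero_smul]
    | add x _ y _ hx hy => rw [map_add, hx, hy, add_zero]
  · simpa only [hx, sub_zero] using hM.sub_proj_mem_radical x

end GenInDeg

end GMod

theorem GHom.exists_retraction [IsSemisimpleRing (𝒜.grading 0)] {P Q : 𝒜.GMod} {s : ℤ}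
    (hP : P.GenInDeg s) (hQ : Q.GenInDeg s) [Module.Projective 𝒜.A Q.M] (φ : GHom P Q)
    (hφ : ∀ x ∈ P.grading s, φ.lin x = 0 → x = 0) :
    ∃ ψ : GHom Q P, ∀ x, ψ.lin (φ.lin x) = x := by
  let φtop : (P.M ⧸ P.radical) →ₗ[𝒜.A] (Q.M ⧸ Q.radical) :=
    P.radical.mapQ Q.radical φ.lin (Submodule.smul_top_le_comap_smul_top 𝒜.jideal φ.lin)
  have hφtop : Function.Injective φtop := by
    rw [injective_iff_map_eq_zero]
    intro x hx
    obtain ⟨x, rfl⟩ := Submodule.mkQ_surjective _ x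
    have hφx : φ.lin (P.proj s x) = 0 := by
      rw [φ.map_proj, ← hQ.mem_radical_iff]
      exact (Submodule.Quotient.mk_eq_zero _).1 hx
    exact (Submodule.Quotient.mk_eq_zero _).2 (hP.mem_radical_iff.2 (hφ _ (P.proj_mem s x) hφx))
  obtain ⟨r, hr⟩ := IsSemisimpleModule.extension_property φtop hφtop LinearMap.id
  obtain ⟨ψ, hψ⟩ := Module.projective_lifting_property P.radical.mkQ (r ∘ₗ Q.radical.mkQ)
    (Submodule.mkQ_surjective _)
  have hψφ : ∀ x, ψ (φ.lin x) - x ∈ P.radical := fun x => by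
    rw [← Submodule.Quotient.eq]
    exact (LinearMap.congr_fun hψ (φ.lin x)).trans (LinearMap.congr_fun hr (P.radical.mkQ x))
  refine ⟨degreeZeroPart ψ, LinearMap.congr_fun (f := (degreeZeroPart ψ).lin ∘ₗ φ.lin)
    (g := LinearMap.id) (hP.linearMap_ext fun x hx => ?_)⟩
  calc (degreeZeroPart ψ).lin (φ.lin x)
      = P.proj s (ψ (φ.lin x)) := degreeZeroPart_of_mem ψ (φ.grad s x hx)
    _ = P.proj s x := sub_eq_zero.1 <| by
        rw [← map_sub, ← hP.mem_radical_iff]; exact hψφ x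
    _ = x := P.proj_of_mem hx

/-! ### Projective covers and minimal resolutions -/

/-- `a` is a finitely generated graded projective cover; minimality is expressed by
`ker a ≤ J P`. -/
structure GHom.IsProjectiveCover {P M : 𝒜.GMod} (a : GHom P M) : Prop where
  finite : Module.Finite 𝒜.A P.M
  projective : Module.Projective 𝒜.A P.M
  surjective : Function.Surjective a.lin
  ker_le : LinearMap.ker a.lin ≤ P.radical

/-- `M` has a minimal graded projective resolution whose `n`-th term is generated in degree
`δ n`. -/
def HasResolutionInDegrees (δ : ℕ → ℤ) (M : 𝒜.GMod) : Prop :=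
  ∃ R : MinRes M, ∀ n, (R.P n).GenInDeg (δ n)

namespace MinRes

variable {M : 𝒜.GMod}

theorem isProjectiveCover_aug (R : MinRes M) : R.aug.IsProjectiveCover where
  finite := R.fg 0
  projective := R.projective 0
  surjective := R.aug_surj
  ker_le := R.exact_aug ▸ R.minimal 0

/-- The resolution of the first syzygy obtained by deleting `P_0`. -/
def tail (R : MinRes M) : MinRes R.aug.ker where
  P n := R.P (n + 1)
  d n := R.d (n + 1)
  aug := R.aug.kerLift (R.d 0) fun x => R.exact_aug.le ⟨x, rfl⟩
  fg n := R.fg (n + 1)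
  projective n := R.projective (n + 1)
  aug_surj y := by
    obtain ⟨x, hx⟩ := R.exact_aug.ge y.2
    exact ⟨x, Subtype.ext hx⟩
  exact_aug := (R.exact 0).trans (LinearMap.ker_codRestrict _ _ _).symm
  exact n := R.exact (n + 1)
  minimal n := R.minimal (n + 1)

/-- The resolution of `M 0` spliced from projective covers `a n : P n → M n` whose kernels are
`M (n + 1)`. -/
def splice {M P : ℕ → 𝒜.GMod} (a : ∀ n, GHom (P n) (M n)) (ι : ∀ n, GHom (M (n + 1)) (P n))
    (ha : ∀ n, (a n).IsProjectiveCover) (hιa : ∀ n, IsShortExact (ι n) (a n)) : MinRes (M 0) :=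
  have range_comp n : LinearMap.range ((ι n).comp (a (n + 1))).lin = LinearMap.ker (a n).lin :=
    (LinearMap.range_comp_of_range_eq_top _
      (LinearMap.range_eq_top.2 (ha (n + 1)).surjective)).trans (hιa n).exact.linearMap_ker_eq.symm
  have ker_comp n : LinearMap.ker ((ι n).comp (a (n + 1))).lin = LinearMap.ker (a (n + 1)).lin :=
    LinearMap.ker_comp_of_ker_eq_bot _ (LinearMap.ker_eq_bot.2 (hιa n).injective)
  { P := P
    d := fun n => (ι n).comp (a (n + 1))
    aug := a 0
    fg := fun n => (ha n).finite
    projective := fun n => (ha n).projective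
    aug_surj := (ha 0).surjective
    exact_aug := range_comp 0
    exact := fun n => (range_comp (n + 1)).trans (ker_comp n).symm
    minimal := fun n => (range_comp n).trans_le (ha n).ker_le }

end MinRes

namespace HasResolutionInDegrees

theorem exists_isProjectiveCover {δ : ℕ → ℤ} {M : 𝒜.GMod} (h : HasResolutionInDegrees δ M) :
    ∃ (P : 𝒜.GMod) (a : GHom P M), a.IsProjectiveCover ∧ P.GenInDeg (δ 0) ∧
      HasResolutionInDegrees (fun n => δ (n + 1)) a.ker := by
  obtain ⟨R, hR⟩ := h
  exact ⟨R.P 0, R.aug, R.isProjectiveCover_aug, hR 0, R.tail, fun n => hR (n + 1)⟩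

theorem of_forall_exists_isProjectiveCover {C : (ℕ → ℤ) → 𝒜.GMod → Prop}
    (step : ∀ δ M, C δ M → ∃ (P : 𝒜.GMod) (a : GHom P M), a.IsProjectiveCover ∧
      P.GenInDeg (δ 0) ∧ C (fun n => δ (n + 1)) a.ker)
    {δ : ℕ → ℤ} {M : 𝒜.GMod} (hM : C δ M) : HasResolutionInDegrees δ M := by
  choose P a hcover hgen hker using step
  let syz : ℕ → {x : (ℕ → ℤ) × 𝒜.GMod // C x.1 x.2} := fun n =>
    Nat.rec ⟨(δ, M), hM⟩
      (fun _ x => ⟨(fun k => x.1.1 (k + 1), (a x.1.1 x.1.2 x.2).ker), hker _ _ x.2⟩) n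
  have degrees_syz : ∀ n k, (syz n).1.1 k = δ (k + n) := fun n => by
    induction n with
    | zero => exact fun k => rfl
    | succ n ih => exact fun k => (ih (k + 1)).trans (congrArg δ (add_right_comm k 1 n))
  refine ⟨MinRes.splice (M := fun n => (syz n).1.2) (fun n => a _ _ (syz n).2)
    (fun n => (a _ _ (syz n).2).kerSubtype) (fun n => hcover _ _ _)
    (fun n => GHom.isShortExact_kerSubtype _ (hcover _ _ _).surjective), fun n => ?_⟩
  have hgen_n := hgen _ _ (syz n).2
  rwa [degrees_syz, zero_add] at hgen_n

end HasResolutionInDegrees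

theorem GHom.IsProjectiveCover.of_split {M N P Q : 𝒜.GMod} {b : GHom Q M}
    (hb : b.IsProjectiveCover) {ι : GHom P Q} {π : GHom Q P} (hπι : ∀ x, π.lin (ι.lin x) = x)
    {c : GHom P N} (hc : Function.Surjective c.lin)
    (hker : (LinearMap.ker b.lin).map π.lin = LinearMap.ker c.lin) : c.IsProjectiveCover where
  finite := have := hb.finite; .of_surjective π.lin (Function.RightInverse.surjective hπι)
  projective := have := hb.projective; .of_split ι.lin π.lin (LinearMap.ext hπι)
  surjective := hc
  ker_le := hker ▸ (Submodule.map_mono hb.ker_le).trans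
    (Submodule.map_le_iff_le_comap.2 (Submodule.smul_top_le_comap_smul_top _ _))

theorem IsShortExact.exists_isProjectiveCover [IsSemisimpleRing (𝒜.grading 0)]
    {K M N P Q : 𝒜.GMod} {f : GHom K M} {g : GHom M N} (hfg : IsShortExact f g) {a : GHom P K}
    {b : GHom Q M} (ha : a.IsProjectiveCover) (hb : b.IsProjectiveCover) {s : ℤ}
    (hP : P.GenInDeg s) (hQ : Q.GenInDeg s) :
    ∃ (R : 𝒜.GMod) (c : GHom R N), c.IsProjectiveCover ∧ R.GenInDeg s ∧
      ∃ (f' : GHom a.ker b.ker) (g' : GHom b.ker c.ker), IsShortExact f' g' := by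
  have := ha.projective
  have := hb.projective
  obtain ⟨φ, hφ⟩ : ∃ φ : GHom P Q, ∀ x, b.lin (φ.lin x) = f.lin (a.lin x) :=
    GHom.exists_lift_of_projective b hb.surjective (f.comp a)
  have hφ_inj : ∀ x ∈ P.grading s, φ.lin x = 0 → x = 0 := fun x hx hφx => by
    have hax : a.lin x = 0 := hfg.injective (by rw [← hφ, hφx, map_zero, map_zero])
    rw [← P.proj_of_mem hx]
    exact hP.mem_radical_iff.1 (ha.ker_le hax)
  obtain ⟨ψ, hψφ⟩ := GHom.exists_retraction hP hQ φ hφ_inj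
  let π := GHom.projKerRetraction φ ψ hψφ
  have hφπ : IsShortExact φ π := GHom.isShortExact_projKerRetraction φ ψ hψφ
  let c : GHom ψ.ker N := (g.comp b).comp ψ.kerSubtype
  have hcπ : ∀ x, c.lin (π.lin x) = g.lin (b.lin x) := fun x => by
    change g.lin (b.lin (x - φ.lin (ψ.lin x))) = _
    rw [map_sub, map_sub, hφ, hfg.exact.apply_apply_eq_zero, sub_zero]
  have hc : Function.Surjective c.lin := fun y => by
    obtain ⟨x, rfl⟩ := (hfg.surjective.comp hb.surjective) y
    exact ⟨π.lin x, hcπ x⟩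
  refine ⟨ψ.ker, c, ?_, hQ.of_surjective π hφπ.surjective, GHom.kerMap a b φ f hφ,
    GHom.kerMap b c π g hcπ, hφπ.kerMap hfg hφ hcπ ha.surjective⟩
  exact hb.of_split (GHom.projKerRetraction_kerSubtype φ ψ hψφ) hc
    (hφπ.map_ker hfg hφ hcπ ha.surjective)

end GradedAlg

open GradedAlg in
theorem isPKMod_of_cokernel_general {F : Type} [Field F] {𝒜 : GradedAlg F}
    [IsSemisimpleRing (𝒜.grading 0)] {K M N : 𝒜.GMod} {f : GHom K M} {g : GHom M N}
    (hfg : IsShortExact f g) {δ : ℕ → ℤ} (hK : HasResolutionInDegrees δ K)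
    (hM : HasResolutionInDegrees δ M) : HasResolutionInDegrees δ N := by
  let C (δ : ℕ → ℤ) (N : 𝒜.GMod) : Prop := ∃ (K M : 𝒜.GMod) (f : GHom K M) (g : GHom M N),
    IsShortExact f g ∧ HasResolutionInDegrees δ K ∧ HasResolutionInDegrees δ M
  refine HasResolutionInDegrees.of_forall_exists_isProjectiveCover (C := C) ?_
    ⟨K, M, f, g, hfg, hK, hM⟩
  rintro δ N ⟨K, M, f, g, hfg, hK, hM⟩
  obtain ⟨P, a, ha, hP, hK'⟩ := hK.exists_isProjectiveCover
  obtain ⟨Q, b, hb, hQ, hM'⟩ := hM.exists_isProjectiveCover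
  obtain ⟨R, c, hc, hR, f', g', hfg'⟩ := hfg.exists_isProjectiveCover ha hb hP hQ
  exact ⟨R, c, hc, hR, a.ker, b.ker, f', g', hfg', hK', hM'⟩

open GradedAlg in
/-- **Proposition (cokernel closure).** Let `0 → K → M → N → 0` be a short exact
sequence of finitely generated graded `A`-modules over a piecewise-Koszul algebra `A`.
If `K` and `M` are piecewise-Koszul modules generated in the same degree `s`, then
`N ≅ M/K` is a piecewise-Koszul module. -/
theorem isPKMod_of_cokernel
    {F : Type} [Field F] (𝒜 : GradedAlg F) (hA : 𝒜.Standing)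
    (p d : ℕ) (hp : 2 ≤ p) (hpd : p ≤ d)
    (T : 𝒜.GMod) (hT : IsTrivialGMod T) (hpk : 𝒜.IsPKAlg p d T)
    (K M N : 𝒜.GMod)
    (hKfg : Module.Finite 𝒜.A K.M) (hMfg : Module.Finite 𝒜.A M.M)
    (hNfg : Module.Finite 𝒜.A N.M)
    (f : GHom K M) (g : GHom M N)
    (hf : Function.Injective f.lin) (hg : Function.Surjective g.lin)
    (hexact : LinearMap.range f.lin = LinearMap.ker g.lin)
    (s : ℤ) (hKs : K.GenInDeg s) (hMs : M.GenInDeg s)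
    (hK : 𝒜.IsPKMod p d s K) (hM : 𝒜.IsPKMod p d s M) :
    𝒜.IsPKMod p d s N := by
  have := hA.semisimple
  exact isPKMod_of_cokernel_general ⟨hf, LinearMap.exact_iff.2 hexact.symm, hg⟩ hK hM
end
end

section
/- Let Γ be the quiver with vertices 1,2,3,4,5 and arrows α_1: 1→2, α_2, α_3: 2→3, α_4, α_5, α_6: 3→4, α_7: 4→5, and let A = FΓ/R be the quotient of the path algebra FΓ by the ideal R generated by the relations α_1α_2 − α_1α_3, α_4α_7 − α_5α_7, α_5α_7 − α_6α_7, α_2α_4, α_3α_6. Then A is a piecewise-Koszul algebra with period p = 3 and jump degree d = 4; that is, the trivial A-module A_0 admits a minimal graded projective resolution whose n-th term is generated in degree δ^4_3(n). -/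
noncomputable section

namespace Stmt11

variable (F : Type) [Field F]

/-- The generators of the path algebra of the quiver `Γ`: five trivial paths
(one for each vertex) and seven arrows `α₁, …, α₇`. -/
abbrev X : Type := Sum (Fin 5) (Fin 7)

/-- the trivial path at vertex `i` -/
def e (i : Fin 5) : FreeAlgebra F (X) := FreeAlgebra.ι F (Sum.inl i)

/-- the arrow `α_{k+1}` -/
def a (k : Fin 7) : FreeAlgebra F (X) := FreeAlgebra.ι F (Sum.inr k)

/-- sources of the arrows `α₁, …, α₇`: `1→2`, `2→3`, `2→3`, `3→4`, `3→4`, `3→4`, `4→5`. -/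
def src : Fin 7 → Fin 5 := ![0, 1, 1, 2, 2, 2, 3]

/-- targets of the arrows `α₁, …, α₇` -/
def tgt : Fin 7 → Fin 5 := ![1, 2, 2, 3, 3, 3, 4]

/-- The defining relations of `A = FΓ/R`: the path-algebra relations of `Γ` (the trivial
paths are orthogonal idempotents summing to `1` and the arrows are concentrated between
their endpoints), together with the relations generating `R`:
`α₁α₂ − α₁α₃`, `α₄α₇ − α₅α₇`, `α₅α₇ − α₆α₇`, `α₂α₄`, `α₃α₆`. -/
inductive Rel : FreeAlgebra F X → FreeAlgebra F X → Prop
  | ortho (i j : Fin 5) : Rel (e F i * e F j) (if i = j then e F i else 0)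
  | total : Rel (∑ i : Fin 5, e F i) 1
  | src_arrow (k : Fin 7) : Rel (e F (src k) * a F k) (a F k)
  | arrow_tgt (k : Fin 7) : Rel (a F k * e F (tgt k)) (a F k)
  | rel1 : Rel (a F 0 * a F 1) (a F 0 * a F 2)
  | rel2 : Rel (a F 3 * a F 6) (a F 4 * a F 6)
  | rel3 : Rel (a F 4 * a F 6) (a F 5 * a F 6)
  | rel4 : Rel (a F 1 * a F 3) 0
  | rel5 : Rel (a F 2 * a F 5) 0

/-- The algebra `A = FΓ/R`. -/
abbrev PathAlg := RingQuot (Rel F)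

/-- the canonical projection `FΓ → A` -/
def π : FreeAlgebra F X →ₐ[F] PathAlg F := RingQuot.mkAlgHom F (Rel F)

/-- the length (number of arrows) of a word in the generators -/
def wordDeg (l : List X) : ℕ := (l.filter Sum.isRight).length

/-- The degree-`n` component of `A = FΓ/R` (grading by path length): the span of the
images of all products of generators containing exactly `n` arrows. -/
def pathGrading (n : ℕ) : Submodule F (PathAlg F) :=
  Submodule.span F
    {y | ∃ l : List X, wordDeg l = n ∧ y = π F ((l.map (FreeAlgebra.ι F)).prod)}

end Stmt11

/-!
The algebra `A` has a basis of nineteen normal words, on which it acts from the right by partial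
maps; this gives coordinates in which syzygies over `A` can be computed. With `P₀ = A`, the seven
arrows generate the kernel of `P₀ → A₀`, and the syzygies between them are generated by the five
defining relations, in degree `2`. Among the latter, `α₂α₄`, `α₃α₆` and `α₁(α₂ − α₃)` satisfy no
further syzygies, since right multiplication by `α₁`, `α₂`, `α₃` is injective on combinations of
paths ending at the source of the arrow, whereas those of `(α₄ − α₅)α₇` and `(α₅ − α₆)α₇` are
generated by a single one, in degree `4`: multiplication by `α₁α₂ = α₁α₃` turns the coefficients of
`α₇` into `α₁α₂(α₄ − α₅) = -α₁α₂α₅ = -α₁α₂(α₅ − α₆)`. The third syzygy module is thus `A e₁` placed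
in degree `4`, and the resolution, whose terms lie in degrees `0, 1, 2, 4`, stops there.
-/

theorem jump_add_mul {d p r : ℕ} (hr : r < p) (q : ℕ) : jump d p (r + p * q) = q * d + r := by
  rw [jump, ← Nat.div_eq_sub_mod_div, Nat.add_mul_mod_self_left, Nat.mod_eq_of_lt hr,
    Nat.add_mul_div_left _ _ (Nat.zero_lt_of_lt hr), Nat.div_eq_of_lt hr, zero_add]

theorem jump_strictMono {d p : ℕ} (hp : 0 < p) (hpd : p ≤ d) : StrictMono (jump d p) := by
  refine strictMono_nat_of_lt_succ fun n => ?_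
  have hr := Nat.mod_lt n hp
  rw [← Nat.mod_add_div n p, jump_add_mul hr]
  rcases (Nat.succ_le_of_lt hr).lt_or_eq with hlt | heq
  · rw [add_right_comm, jump_add_mul hlt]
    exact Nat.lt_succ_self _
  · have hsucc : n % p + p * (n / p) + 1 = 0 + p * (n / p + 1) := by rw [mul_add, ← heq]; lia
    rw [hsucc, jump_add_mul hp, add_mul]
    lia

/-! ### Graded resolutions given by matrices -/

section ProjSum

variable {A ι : Type*} [Ring A] {ε : ι → A}

/-- The module `⨁ᵢ A εᵢ`, for idempotents `εᵢ`, realised inside the free module `Aᴵ` as the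
families fixed by right multiplication with the `εᵢ`. -/
def projSum (ε : ι → A) : Submodule A (ι → A) where
  carrier := {x | ∀ i, x i * ε i = x i}
  add_mem' hx hy i := by simp only [Pi.add_apply, add_mul, hx i, hy i]
  zero_mem' i := zero_mul _
  smul_mem' c x hx i := by simp only [Pi.smul_apply, smul_eq_mul, mul_assoc, hx i]

namespace projSum

/-- The projection of the free module `Aᴵ` onto its direct summand `⨁ᵢ A εᵢ`. -/
def proj (hε : ∀ i, IsIdempotentElem (ε i)) : (ι → A) →ₗ[A] projSum ε where
  toFun x := ⟨fun i => x i * ε i, fun i => by rw [mul_assoc, hε i]⟩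
  map_add' x y := Subtype.ext (funext fun i => add_mul (x i) (y i) (ε i))
  map_smul' c x := Subtype.ext (funext fun i => mul_assoc c (x i) (ε i))

theorem proj_comp_subtype (hε : ∀ i, IsIdempotentElem (ε i)) :
    proj hε ∘ₗ (projSum ε).subtype = LinearMap.id :=
  LinearMap.ext fun x => Subtype.ext (funext x.2)

theorem projective [Finite ι] (hε : ∀ i, IsIdempotentElem (ε i)) :
    Module.Projective A (projSum ε) :=
  .of_split _ _ (proj_comp_subtype hε)

theorem finite [Finite ι] (hε : ∀ i, IsIdempotentElem (ε i)) : Module.Finite A (projSum ε) :=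
  .of_surjective (proj hε) fun x => ⟨x, DFunLike.congr_fun (proj_comp_subtype hε) x⟩

variable [DecidableEq ι]

/-- The generator `εᵢ` of the `i`-th summand of `⨁ᵢ A εᵢ`. -/
def gen (hε : ∀ i, IsIdempotentElem (ε i)) (i : ι) : projSum ε := proj hε (Pi.single i 1)

theorem coe_gen (hε : ∀ i, IsIdempotentElem (ε i)) (i : ι) :
    (gen hε i : ι → A) = Pi.single i (ε i) := by
  ext k
  rcases eq_or_ne k i with rfl | hk
  · simp [gen, proj]
  · simp [gen, proj, hk]

theorem eq_sum_smul_gen [Fintype ι] (hε : ∀ i, IsIdempotentElem (ε i)) (x : projSum ε) :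
    x = ∑ i, x.1 i • gen hε i := by
  ext k
  simp only [AddSubmonoidClass.coe_finsetSum, Submodule.coe_smul, coe_gen, Finset.sum_apply,
    Pi.smul_apply, Pi.single_apply, smul_eq_mul, mul_ite, mul_zero, Finset.sum_ite_eq,
    Finset.mem_univ, if_true, x.2 k]

end projSum

end ProjSum

/-- An acyclic complex of left modules `⋯ → ⨁ᵢ A ε₂ᵢ → ⨁ᵢ A ε₁ᵢ → ⨁ᵢ A ε₀ᵢ` whose differentials are
right multiplication of row vectors by the matrices `D n`, with entries in `ε₍ₙ₊₁₎ᵢ A εₙⱼ`. -/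
structure MatrixResolution (A : Type*) [Ring A] where
  rank : ℕ → ℕ
  ε (n : ℕ) : Fin (rank n) → A
  D (n : ℕ) : Matrix (Fin (rank (n + 1))) (Fin (rank n)) A
  isIdempotentElem (n : ℕ) (i) : IsIdempotentElem (ε n i)
  ε_mul (n : ℕ) (i j) : ε (n + 1) i * D n i j = D n i j
  mul_ε (n : ℕ) (i j) : D n i j * ε n j = D n i j
  mul_eq_zero (n : ℕ) : D (n + 1) * D n = 0
  exact (n : ℕ) : ∀ y ∈ projSum (ε (n + 1)), Matrix.vecMul y (D n) = 0 →
    ∃ x, Matrix.vecMul x (D (n + 1)) = y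

namespace MatrixResolution

open Matrix

variable {A B : Type*} [Ring A] [Ring B] (R : MatrixResolution A)

/-- Transport of the complex along an isomorphism of rings. -/
def map (f : A ≃+* B) : MatrixResolution B where
  rank := R.rank
  ε n i := f (R.ε n i)
  D n := (R.D n).map f
  isIdempotentElem n i := (R.isIdempotentElem n i).map f
  ε_mul n i j := by rw [Matrix.map_apply, ← map_mul, R.ε_mul]
  mul_ε n i j := by rw [Matrix.map_apply, ← map_mul, R.mul_ε]
  mul_eq_zero n := by
    rw [← Matrix.map_mul, R.mul_eq_zero, Matrix.map_zero _ (map_zero f)]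
  exact n y hy hyD := by
    have hy' : f.symm ∘ y ∈ projSum (R.ε (n + 1)) := fun i => by
      simpa using congrArg f.symm (hy i)
    have hyD' : (f.symm ∘ y) ᵥ* R.D n = 0 := by
      ext i
      simpa [hyD, Function.comp_def, eq_comm] using
        RingHom.map_vecMul (f.symm : B →+* A) ((R.D n).map f) y i
    obtain ⟨x, hx⟩ := R.exact n _ hy' hyD'
    refine ⟨f ∘ x, funext fun i => ?_⟩
    simpa [hx, eq_comm] using RingHom.map_vecMul (f : A →+* B) (R.D (n + 1)) x i

theorem vecMul_mem_projSum (n : ℕ) (x : Fin (R.rank (n + 1)) → A) :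
    x ᵥ* R.D n ∈ projSum (R.ε n) := fun j => by
  simp only [vecMul, dotProduct, Finset.sum_mul, mul_assoc, R.mul_ε]

theorem proj_vecMul (n : ℕ) (x : Fin (R.rank (n + 1)) → A) :
    (projSum.proj (R.isIdempotentElem (n + 1)) x : Fin (R.rank (n + 1)) → A) ᵥ* R.D n =
      x ᵥ* R.D n := by
  ext j
  simp only [vecMul, dotProduct, projSum.proj, LinearMap.coe_mk, AddHom.coe_mk, mul_assoc, R.ε_mul]

/-- The differential `⨁ᵢ A ε₍ₙ₊₁₎ᵢ → ⨁ⱼ A εₙⱼ`. -/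
def differential (n : ℕ) : projSum (R.ε (n + 1)) →ₗ[A] projSum (R.ε n) :=
  (vecMulLinear (R.D n)).restrict fun x _ => R.vecMul_mem_projSum n x

theorem coe_differential (n : ℕ) (x : projSum (R.ε (n + 1))) :
    (R.differential n x : _ → A) = x.1 ᵥ* R.D n := rfl

theorem differential_apply (n : ℕ) (x : projSum (R.ε (n + 1))) (k) :
    (R.differential n x).1 k = ∑ i, x.1 i * R.D n i k := rfl

theorem mem_range_differential {n : ℕ} {y : projSum (R.ε n)} :
    y ∈ LinearMap.range (R.differential n) ↔ ∃ x, x ᵥ* R.D n = y.1 := by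
  constructor
  · rintro ⟨x, rfl⟩
    exact ⟨x, rfl⟩
  · rintro ⟨x, hx⟩
    exact ⟨projSum.proj (R.isIdempotentElem (n + 1)) x, Subtype.ext ((R.proj_vecMul n x).trans hx)⟩

theorem range_differential_succ (n : ℕ) : LinearMap.range (R.differential (n + 1)) =
    LinearMap.ker (R.differential n) := by
  ext y
  rw [mem_range_differential, LinearMap.mem_ker, Subtype.ext_iff, coe_differential]
  constructor
  · rintro ⟨x, hx⟩
    rw [← hx, vecMul_vecMul, R.mul_eq_zero, vecMul_zero, ZeroMemClass.coe_zero]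
  · exact R.exact n y y.2

end MatrixResolution

theorem iSupIndep_iInf_comap {F M N ι κ : Type*} [Semiring F] [AddCommMonoid M] [AddCommMonoid N]
    [Module F M] [Module F N] {V : κ → Submodule F N} (hV : iSupIndep V) (f : ι → M →ₗ[F] N)
    (hf : ∀ x, (∀ i, f i x = 0) → x = 0) : iSupIndep fun j => ⨅ i, (V j).comap (f i) := by
  refine fun j => Submodule.disjoint_def.2 fun x hx hx' => hf x fun i => ?_
  refine Submodule.disjoint_def.1 (hV j) (f i x) (Submodule.mem_iInf _ |>.1 hx i) ?_
  have hle : ⨆ k, ⨆ (_ : k ≠ j), ⨅ i, (V k).comap (f i) ≤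
      (⨆ k, ⨆ (_ : k ≠ j), V k).comap (f i) :=
    iSup₂_le fun k hk => (iInf_le _ i).trans (Submodule.comap_mono (le_iSup₂_of_le k hk le_rfl))
  exact hle hx'

namespace GradedAlg

open Matrix

variable {F : Type} [Field F] (𝒜 : GradedAlg F)

/-- The grading of `𝒜` extended by zero to negative degrees. -/
def intGrading : ℤ → Submodule F 𝒜.A
  | .ofNat n => 𝒜.grading n
  | .negSucc _ => ⊥

theorem intGrading_natCast (n : ℕ) : 𝒜.intGrading n = 𝒜.grading n := rfl

theorem intGrading_indep : iSupIndep 𝒜.intGrading := by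
  rintro (n | n)
  · have hindep := (DirectSum.Decomposition.isInternal 𝒜.grading).submodule_iSupIndep
    refine (hindep n).mono_right (iSup₂_le ?_)
    rintro (m | m) hm
    · exact le_iSup₂_of_le m (fun h => hm (congrArg _ h)) le_rfl
    · exact bot_le
  · exact disjoint_bot_left

variable {𝒜}

theorem mul_mem_intGrading {i : ℕ} {k : ℤ} {a b : 𝒜.A} (ha : a ∈ 𝒜.grading i)
    (hb : b ∈ 𝒜.intGrading k) : a * b ∈ 𝒜.intGrading (i + k) := by
  obtain n | n := k
  · exact SetLike.mul_mem_graded (A := 𝒜.grading) ha hb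
  · rw [(Submodule.mem_bot F).1 hb, mul_zero]
    exact zero_mem _

theorem intGrading_mul_mem {i : ℕ} {k : ℤ} {a b : 𝒜.A} (ha : a ∈ 𝒜.intGrading k)
    (hb : b ∈ 𝒜.grading i) : a * b ∈ 𝒜.intGrading (k + i) := by
  obtain n | n := k
  · exact SetLike.mul_mem_graded (A := 𝒜.grading) ha hb
  · rw [(Submodule.mem_bot F).1 ha, zero_mul]
    exact zero_mem _

theorem mem_jideal_of_mem_grading {n : ℕ} (hn : n ≠ 0) {a : 𝒜.A} (ha : a ∈ 𝒜.grading n) :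
    a ∈ 𝒜.jideal :=
  HomogeneousIdeal.mem_irrelevant_of_mem 𝒜.grading hn.bot_lt ha

theorem GMod.intGrading_smul_mem {M : 𝒜.GMod} {k s : ℤ} {a : 𝒜.A} {m : M.M}
    (ha : a ∈ 𝒜.intGrading k) (hm : m ∈ M.grading s) : a • m ∈ M.grading (k + s) := by
  obtain n | n := k
  · exact M.smul_mem ha hm
  · rw [(Submodule.mem_bot F).1 ha, zero_smul]
    exact zero_mem _

theorem IsTrivialGMod.grading_zero {T : 𝒜.GMod} (hT : IsTrivialGMod T) : T.grading 0 = ⊤ := by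
  rw [eq_top_iff, ← T.sup_eq_top]
  refine iSup_le fun j => ?_
  rcases eq_or_ne j 0 with rfl | hj
  · exact le_rfl
  · exact (hT.1 j hj).trans_le bot_le

section ProjMod

variable {r : ℕ} {ε : Fin r → 𝒜.A}

/-- The `i`-th coordinate `⨁ᵢ A εᵢ → A`. -/
def coord (ε : Fin r → 𝒜.A) (i : Fin r) : projSum ε →ₗ[F] 𝒜.A :=
  (LinearMap.proj i ∘ₗ (projSum ε).subtype).restrictScalars F

/-- The component of degree `j` of `⨁ᵢ A εᵢ` when all generators `εᵢ` are placed in degree `s`. -/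
def projGrading (ε : Fin r → 𝒜.A) (s j : ℤ) : Submodule F (projSum ε) :=
  ⨅ i, (𝒜.intGrading (j - s)).comap (coord ε i)

theorem mem_projGrading {s j : ℤ} {x : projSum ε} :
    x ∈ projGrading ε s j ↔ ∀ i, x.1 i ∈ 𝒜.intGrading (j - s) := Submodule.mem_iInf _

theorem projGrading_indep (s : ℤ) : iSupIndep (projGrading ε s) :=
  iSupIndep_iInf_comap (𝒜.intGrading_indep.comp (sub_left_injective (b := s))) (coord ε)
    fun _ hx => Subtype.ext (funext hx)

theorem smul_mem_projGrading {s j : ℤ} {n : ℕ} {a : 𝒜.A} {x : projSum ε} (ha : a ∈ 𝒜.grading n)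
    (hx : x ∈ projGrading ε s j) : a • x ∈ projGrading ε s (n + j) :=
  mem_projGrading.2 fun i => by
    rw [add_sub_assoc]
    exact mul_mem_intGrading ha (mem_projGrading.1 hx i)

theorem gen_mem_projGrading (hε : ∀ i, IsIdempotentElem (ε i)) (hε₀ : ∀ i, ε i ∈ 𝒜.grading 0)
    (s : ℤ) (i : Fin r) : projSum.gen hε i ∈ projGrading ε s s :=
  mem_projGrading.2 fun k => by
    rw [projSum.coe_gen, sub_self, ← Nat.cast_zero, intGrading_natCast]
    rcases eq_or_ne k i with rfl | hk
    · simpa only [Pi.single_eq_same] using hε₀ k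
    · simpa only [Pi.single_eq_of_ne hk] using zero_mem _

theorem iSup_projGrading (hε : ∀ i, IsIdempotentElem (ε i)) (hε₀ : ∀ i, ε i ∈ 𝒜.grading 0)
    (s : ℤ) : ⨆ j, projGrading ε s j = ⊤ := by
  classical
  refine eq_top_iff.2 fun x _ => ?_
  rw [projSum.eq_sum_smul_gen hε x]
  refine Submodule.sum_mem _ fun i _ => ?_
  rw [← DirectSum.sum_support_decompose 𝒜.grading (x.1 i), Finset.sum_smul]
  exact Submodule.sum_mem _ fun n _ => Submodule.mem_iSup_of_mem (n + s)
    (smul_mem_projGrading (SetLike.coe_mem _) (gen_mem_projGrading hε hε₀ s i))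

/-- The graded projective module `⨁ᵢ A εᵢ` with the generators `εᵢ` placed in degree `s`. -/
def projMod (hε : ∀ i, IsIdempotentElem (ε i)) (hε₀ : ∀ i, ε i ∈ 𝒜.grading 0) (s : ℤ) :
    𝒜.GMod where
  M := projSum ε
  grading := projGrading ε s
  sup_eq_top := iSup_projGrading hε hε₀ s
  indep := projGrading_indep s
  smul_mem := smul_mem_projGrading

theorem projMod_genInDeg (hε : ∀ i, IsIdempotentElem (ε i)) (hε₀ : ∀ i, ε i ∈ 𝒜.grading 0)
    (s : ℤ) : (projMod hε hε₀ s).GenInDeg s := by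
  refine eq_top_iff.2 fun x _ => ?_
  rw [projSum.eq_sum_smul_gen hε x]
  exact Submodule.sum_mem _ fun i _ =>
    Submodule.smul_mem _ _ (Submodule.subset_span (gen_mem_projGrading hε hε₀ s i))

end ProjMod

end GradedAlg

namespace MatrixResolution

open GradedAlg Matrix

variable {F : Type} [Field F] {𝒜 : GradedAlg F} (R : MatrixResolution 𝒜.A) {δ : ℕ → ℕ}

/-- The differentials of the complex are homogeneous of degree `0` when the generators of its `n`-th
term are placed in degree `δ n`. -/
structure IsGraded (R : MatrixResolution 𝒜.A) (δ : ℕ → ℕ) : Prop where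
  ε_mem (n : ℕ) (i) : R.ε n i ∈ 𝒜.grading 0
  D_mem (n : ℕ) (i j) : R.D n i j ∈ 𝒜.grading (δ (n + 1) - δ n)

variable {R}

theorem IsGraded.differential_mem (hR : R.IsGraded δ) (hδ : StrictMono δ) {n : ℕ} {j : ℤ}
    {x : projSum (R.ε (n + 1))} (hx : x ∈ projGrading (R.ε (n + 1)) (δ (n + 1)) j) :
    R.differential n x ∈ projGrading (R.ε n) (δ n) j := by
  refine mem_projGrading.2 fun k => ?_
  rw [differential_apply]
  refine Submodule.sum_mem _ fun i _ => ?_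
  have hdeg : j - δ n = j - δ (n + 1) + (δ (n + 1) - δ n : ℕ) := by
    rw [Nat.cast_sub (hδ.monotone n.le_succ), sub_add_sub_cancel]
  rw [hdeg]
  exact intGrading_mul_mem (mem_projGrading.1 hx i) (hR.D_mem n i k)

theorem IsGraded.range_differential_le (hR : R.IsGraded δ) (hδ : StrictMono δ) (n : ℕ) :
    LinearMap.range (R.differential n) ≤ 𝒜.jideal • (⊤ : Submodule 𝒜.A (projSum (R.ε n))) := by
  rintro _ ⟨x, rfl⟩
  rw [projSum.eq_sum_smul_gen (R.isIdempotentElem n) (R.differential n x)]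
  refine Submodule.sum_mem _ fun k _ => Submodule.smul_mem_smul ?_ Submodule.mem_top
  rw [differential_apply]
  exact Submodule.sum_mem _ fun i _ => Ideal.mul_mem_left _ _ <|
    mem_jideal_of_mem_grading (Nat.sub_ne_zero_of_lt (hδ n.lt_succ_self)) (hR.D_mem n i k)

theorem IsGraded.exists_minRes (hR : R.IsGraded δ) (hδ : StrictMono δ) {T : 𝒜.GMod}
    (aug : GHom (projMod (R.isIdempotentElem 0) (hR.ε_mem 0) (δ 0)) T)
    (aug_surj : Function.Surjective aug.lin)
    (exact_aug : LinearMap.range (R.differential 0) = LinearMap.ker aug.lin) :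
    ∃ S : MinRes T, ∀ n, (S.P n).GenInDeg (δ n) :=
  ⟨{ P n := projMod (R.isIdempotentElem n) (hR.ε_mem n) (δ n)
     d n := ⟨R.differential n, fun _ _ => hR.differential_mem hδ⟩
     aug := aug
     fg n := projSum.finite (R.isIdempotentElem n)
     projective n := projSum.projective (R.isIdempotentElem n)
     aug_surj := aug_surj
     exact_aug := exact_aug
     exact := R.range_differential_succ
     minimal := hR.range_differential_le hδ }, fun n =>
    projMod_genInDeg (R.isIdempotentElem n) (hR.ε_mem n) (δ n)⟩

theorem IsGraded.exists_minRes_of_isTrivial (hR : R.IsGraded δ) (hδ : StrictMono δ)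
    (hδ₀ : δ 0 = 0) [Unique (Fin (R.rank 0))] (hε : R.ε 0 default = 1)
    (hD : 𝒜.jideal = Ideal.span (Set.range fun i => R.D 0 i default)) {T : 𝒜.GMod}
    (hT : IsTrivialGMod T) : ∃ S : MinRes T, ∀ n, (S.P n).GenInDeg (δ n) := by
  obtain ⟨φ⟩ := hT.2
  let aug : projSum (R.ε 0) →ₗ[𝒜.A] T.M :=
    φ.symm ∘ₗ 𝒜.jideal.mkQ ∘ₗ LinearMap.proj default ∘ₗ (projSum (R.ε 0)).subtype
  have aug_eq_smul (x : projSum (R.ε 0)) :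
      aug x = x.1 default • φ.symm (𝒜.jideal.mkQ 1) := by
    rw [← map_smul, ← map_smul, smul_eq_mul, mul_one]
    rfl
  have aug_surj : Function.Surjective aug := fun y => by
    obtain ⟨a, ha⟩ := 𝒜.jideal.mkQ_surjective (φ y)
    exact ⟨⟨fun _ => a, fun i => by rw [Unique.eq_default i, hε, mul_one]⟩,
      φ.symm_apply_eq.2 ha⟩
  have range_differential : LinearMap.range (R.differential 0) = LinearMap.ker aug := by
    ext x
    have mem_ker : x ∈ LinearMap.ker aug ↔ x.1 default ∈ 𝒜.jideal :=
      φ.symm.map_eq_zero_iff.trans (Submodule.Quotient.mk_eq_zero _)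
    rw [mem_ker, hD, Ideal.mem_span_range_iff_exists_fun, R.mem_range_differential]
    exact exists_congr fun c => funext_iff.trans Unique.forall_iff
  have aug_mem (j : ℤ) (x) (hx : x ∈ projGrading (R.ε 0) (δ 0) j) : aug x ∈ T.grading j := by
    have hx₀ : x.1 default ∈ 𝒜.intGrading j := by
      simpa only [hδ₀, Nat.cast_zero, sub_zero] using mem_projGrading.1 hx default
    rw [aug_eq_smul, ← add_zero j]
    exact GMod.intGrading_smul_mem hx₀ (hT.grading_zero ▸ Submodule.mem_top)
  exact hR.exists_minRes hδ ⟨aug, aug_mem⟩ aug_surj range_differential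

end MatrixResolution

/-! ### Normal words and coordinates -/

section PartialEnd

variable {F W : Type*} [Semiring F]

/-- The endomorphism of the free module with basis `W` induced by a partial self-map of `W`,
sending to `0` the basis vectors at which the map is undefined. -/
def partialEnd (F : Type*) [Semiring F] (f : W → Option W) : Module.End F (W →₀ F) :=
  Finsupp.linearCombination F fun w => (f w).elim 0 (Finsupp.single · 1)

theorem partialEnd_single (f : W → Option W) (w : W) :
    partialEnd F f (Finsupp.single w 1) = (f w).elim 0 (Finsupp.single · 1) := by
  rw [partialEnd, Finsupp.linearCombination_single, one_smul]

theorem partialEnd_mul (f g : W → Option W) :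
    partialEnd F g * partialEnd F f = partialEnd F fun w => (f w).bind g := by
  ext w : 2
  simp only [LinearMap.comp_apply, Finsupp.lsingle_apply, Module.End.mul_apply, partialEnd_single]
  cases f w with
  | none => exact map_zero _
  | some w' => exact partialEnd_single g w'

theorem partialEnd_apply {f : W → Option W} {w' : W} {S : Finset W}
    (hS : ∀ w, f w = some w' ↔ w ∈ S) (v : W →₀ F) :
    partialEnd F f v w' = ∑ w ∈ S, v w := by
  classical
  induction v using Finsupp.induction_linear with
  | zero => simp only [map_zero, Finsupp.coe_zero, Pi.zero_apply, Finset.sum_const_zero]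
  | add v w hv hw => simp only [map_add, Finsupp.add_apply, hv, hw, Finset.sum_add_distrib]
  | single w c =>
    have hsum : ∑ u ∈ S, Finsupp.single w c u = if w ∈ S then c else 0 := by
      simp only [Finsupp.single_apply, Finset.sum_ite_eq]
    rw [hsum, ← mul_one c, ← smul_eq_mul, ← Finsupp.smul_single, map_smul, partialEnd_single]
    simp only [← hS]
    cases f w <;> simp [Finsupp.single_apply]

theorem partialEnd_none : partialEnd F (fun _ : W => none) = 0 := by
  ext w : 2
  exact partialEnd_single _ w

open MulOpposite

theorem op_partialEnd_mul {f g h : W → Option W} (H : ∀ w, (f w).bind g = h w) :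
    op (partialEnd F f) * op (partialEnd F g) = op (partialEnd F h) := by
  rw [← op_mul, partialEnd_mul, funext H]

theorem op_partialEnd_mul_eq_zero {f g : W → Option W} (H : ∀ w, (f w).bind g = none) :
    op (partialEnd F f) * op (partialEnd F g) = 0 := by
  rw [op_partialEnd_mul H, partialEnd_none, op_zero]

end PartialEnd

namespace Stmt11

/-- The nineteen normal words for the relations of `A = FΓ/R`. Arrows being numbered from `0`,
the constructor `path014` stands for the path `α₁α₂α₅`. -/
inductive NormalPath
  | vertex (i : Fin 5)
  | arrow (k : Fin 7)
  | path01
  | path14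
  | path15
  | path23
  | path24
  | path36
  | path014
  deriving DecidableEq, Fintype

namespace NormalPath

/-- The end point of a normal word. -/
def target : NormalPath → Fin 5
  | vertex i => i
  | arrow k => tgt k
  | path01 => 2
  | path36 => 4
  | _ => 3

/-- The product of a normal word with a vertex, `none` standing for `0`. -/
def mulVertex (i : Fin 5) (w : NormalPath) : Option NormalPath :=
  if w.target = i then some w else none

/-- The normal form of the product of a normal word with an arrow, `none` standing for `0`. -/
def mulArrow : Fin 7 → NormalPath → Option NormalPath
  | k, vertex i => if src k = i then some (arrow k) else none
  | 1, arrow 0 => some path01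
  | 2, arrow 0 => some path01
  | 4, arrow 1 => some path14
  | 5, arrow 1 => some path15
  | 3, arrow 2 => some path23
  | 4, arrow 2 => some path24
  | 6, arrow 3 => some path36
  | 6, arrow 4 => some path36
  | 6, arrow 5 => some path36
  | 4, path01 => some path014
  | _, _ => none

end NormalPath

open NormalPath

variable {F : Type} [Field F]

/-- The trivial path at the vertex `i`, in `A = FΓ/R`. -/
def vtx (i : Fin 5) : PathAlg F := π F (e F i)

/-- The arrow `k`, in `A = FΓ/R`. -/
def arr (k : Fin 7) : PathAlg F := π F (a F k)

theorem π_eq_of_rel {x y : FreeAlgebra F X} (h : Rel F x y) : π F x = π F y :=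
  RingQuot.mkAlgHom_rel F h

theorem vtx_mul_vtx (i j : Fin 5) : vtx i * vtx j = if i = j then vtx i else (0 : PathAlg F) := by
  have h := π_eq_of_rel (Rel.ortho (F := F) i j)
  rwa [map_mul, apply_ite (π F), map_zero] at h

theorem sum_vtx : ∑ i, vtx i = (1 : PathAlg F) := by
  have h := π_eq_of_rel (Rel.total (F := F))
  rwa [map_sum, map_one] at h

theorem vtx_src_mul_arr (k : Fin 7) : vtx (src k) * arr k = (arr k : PathAlg F) := by
  have h := π_eq_of_rel (Rel.src_arrow (F := F) k)
  rwa [map_mul] at h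

theorem arr_mul_vtx_tgt (k : Fin 7) : arr k * vtx (tgt k) = (arr k : PathAlg F) := by
  have h := π_eq_of_rel (Rel.arrow_tgt (F := F) k)
  rwa [map_mul] at h

theorem arr_mul_vtx (k : Fin 7) (i : Fin 5) :
    arr k * vtx i = if tgt k = i then arr k else (0 : PathAlg F) := by
  rw [← arr_mul_vtx_tgt, mul_assoc, vtx_mul_vtx, mul_ite, mul_zero]

theorem vtx_mul_arr (i : Fin 5) (k : Fin 7) :
    vtx i * arr k = if src k = i then arr k else (0 : PathAlg F) := by
  rw [← vtx_src_mul_arr, ← mul_assoc, vtx_mul_vtx]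
  split_ifs with h h' h' <;> simp_all

theorem arr_zero_mul_arr_two : arr 0 * arr 2 = (arr 0 * arr 1 : PathAlg F) := by
  have h := π_eq_of_rel (Rel.rel1 (F := F))
  rw [map_mul, map_mul] at h
  exact h.symm

theorem arr_four_mul_arr_six : arr 4 * arr 6 = (arr 3 * arr 6 : PathAlg F) := by
  have h := π_eq_of_rel (Rel.rel2 (F := F))
  rw [map_mul, map_mul] at h
  exact h.symm

theorem arr_five_mul_arr_six : arr 5 * arr 6 = (arr 3 * arr 6 : PathAlg F) := by
  have h := π_eq_of_rel (Rel.rel3 (F := F))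
  rw [map_mul, map_mul] at h
  exact h.symm.trans arr_four_mul_arr_six

theorem arr_one_mul_arr_three : arr 1 * arr 3 = (0 : PathAlg F) := by
  have h := π_eq_of_rel (Rel.rel4 (F := F))
  rwa [map_mul, map_zero] at h

theorem arr_two_mul_arr_five : arr 2 * arr 5 = (0 : PathAlg F) := by
  have h := π_eq_of_rel (Rel.rel5 (F := F))
  rwa [map_mul, map_zero] at h

/-- The image of a normal word in `A = FΓ/R`. -/
def NormalPath.eval : NormalPath → PathAlg F
  | vertex i => vtx i
  | arrow k => arr k
  | path01 => arr 0 * arr 1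
  | path14 => arr 1 * arr 4
  | path15 => arr 1 * arr 5
  | path23 => arr 2 * arr 3
  | path24 => arr 2 * arr 4
  | path36 => arr 3 * arr 6
  | path014 => arr 0 * arr 1 * arr 4

theorem eval_mul_vtx_target (w : NormalPath) : w.eval * vtx w.target = (w.eval : PathAlg F) := by
  cases w <;> simp [eval, target, mul_assoc, vtx_mul_vtx, arr_mul_vtx, tgt]

theorem eval_mul_vtx (w : NormalPath) (i : Fin 5) :
    w.eval * vtx i = (w.mulVertex i).elim (0 : PathAlg F) eval := by
  rw [← eval_mul_vtx_target, mul_assoc, vtx_mul_vtx, mulVertex]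
  split_ifs
  · exact eval_mul_vtx_target w
  · exact mul_zero _

theorem arr_zero_mul_arr_one_mul_arr_three : arr 0 * arr 1 * arr 3 = (0 : PathAlg F) := by
  rw [mul_assoc, arr_one_mul_arr_three, mul_zero]

theorem arr_zero_mul_arr_one_mul_arr_five : arr 0 * arr 1 * arr 5 = (0 : PathAlg F) := by
  rw [← arr_zero_mul_arr_two, mul_assoc, arr_two_mul_arr_five, mul_zero]

theorem arr_one_mul_arr_three_mul_arr_six : arr 1 * (arr 3 * arr 6) = (0 : PathAlg F) := by
  rw [← mul_assoc, arr_one_mul_arr_three, zero_mul]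

theorem arr_two_mul_arr_three_mul_arr_six : arr 2 * (arr 3 * arr 6) = (0 : PathAlg F) := by
  rw [← arr_five_mul_arr_six, ← mul_assoc, arr_two_mul_arr_five, zero_mul]

theorem eval_mul_arr_of_ne {w : NormalPath} {k : Fin 7} (h : w.target ≠ src k) :
    w.eval * arr k = (0 : PathAlg F) := by
  rw [← vtx_src_mul_arr, ← mul_assoc, eval_mul_vtx, mulVertex, if_neg h]
  exact zero_mul _

theorem eval_mul_arr (w : NormalPath) (k : Fin 7) :
    w.eval * arr k = (w.mulArrow k).elim (0 : PathAlg F) eval := by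
  by_cases h : w.target = src k
  swap
  · have mulArrow_of_ne : ∀ k w, target w ≠ src k → w.mulArrow k = none := by decide
    rw [eval_mul_arr_of_ne h, mulArrow_of_ne k w h]
    rfl
  rcases w with i | l | _
  · simp only [eval, mulArrow, vtx_mul_arr]
    split_ifs <;> rfl
  · fin_cases k <;> fin_cases l <;>
      first
        | exact absurd h (by decide)
        | rfl
        | exact arr_zero_mul_arr_two
        | exact arr_one_mul_arr_three
        | exact arr_two_mul_arr_five
        | exact arr_four_mul_arr_six
        | exact arr_five_mul_arr_six
  all_goals
    fin_cases k <;>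
      first
        | exact absurd h (by decide)
        | rfl
        | exact arr_zero_mul_arr_one_mul_arr_three
        | exact arr_zero_mul_arr_one_mul_arr_five
        | simp only [eval, mulArrow, mul_assoc, Fin.reduceFinMk, Option.elim_none, mul_zero,
            arr_four_mul_arr_six, arr_five_mul_arr_six, arr_one_mul_arr_three_mul_arr_six,
            arr_two_mul_arr_three_mul_arr_six]

section Coordinates

open MulOpposite

variable (F)

/-- Right multiplication of normal words by a generator of the free algebra. -/
def NormalPath.mulGen : X → NormalPath → Option NormalPath :=
  Sum.elim mulVertex mulArrow

/-- The right action of the free algebra on the vector space with basis the normal words. -/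
def freeRightAction : FreeAlgebra F X →ₐ[F] (Module.End F (NormalPath →₀ F))ᵐᵒᵖ :=
  FreeAlgebra.lift F fun x => op (partialEnd F (mulGen x))

theorem freeRightAction_e (i : Fin 5) :
    freeRightAction F (e F i) = op (partialEnd F (mulVertex i)) :=
  FreeAlgebra.lift_ι_apply _ _

theorem freeRightAction_a (k : Fin 7) :
    freeRightAction F (a F k) = op (partialEnd F (mulArrow k)) :=
  FreeAlgebra.lift_ι_apply _ _

theorem sum_partialEnd_mulVertex : ∑ i, partialEnd F (mulVertex i) = 1 := by
  ext w : 2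
  simp only [LinearMap.comp_apply, LinearMap.sum_apply, Finsupp.lsingle_apply, partialEnd_single,
    mulVertex, Module.End.one_apply]
  rw [Finset.sum_eq_single w.target]
  · simp
  · grind
  · simp

theorem freeRightAction_eq_of_rel {x y : FreeAlgebra F X} (h : Rel F x y) :
    freeRightAction F x = freeRightAction F y := by
  cases h with
  | ortho i j =>
    rw [apply_ite (freeRightAction F), map_mul, map_zero]
    simp only [freeRightAction_e]
    split_ifs
    · exact op_partialEnd_mul (by revert i j; decide)
    · exact op_partialEnd_mul_eq_zero (by revert i j; decide)
  | total =>
    simp only [map_sum, freeRightAction_e, map_one, ← Finset.op_sum, sum_partialEnd_mulVertex,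
      op_one]
  | src_arrow k =>
    simpa only [map_mul, freeRightAction_e, freeRightAction_a] using
      op_partialEnd_mul (by revert k; decide)
  | arrow_tgt k =>
    simpa only [map_mul, freeRightAction_e, freeRightAction_a] using
      op_partialEnd_mul (by revert k; decide)
  | rel1 =>
    simp only [map_mul, freeRightAction_a]
    exact (op_partialEnd_mul fun w => rfl).trans (op_partialEnd_mul (by decide)).symm
  | rel2 =>
    simp only [map_mul, freeRightAction_a]
    exact (op_partialEnd_mul fun w => rfl).trans (op_partialEnd_mul (by decide)).symm
  | rel3 =>
    simp only [map_mul, freeRightAction_a]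
    exact (op_partialEnd_mul fun w => rfl).trans (op_partialEnd_mul (by decide)).symm
  | rel4 =>
    simpa only [map_mul, map_zero, freeRightAction_a] using op_partialEnd_mul_eq_zero (by decide)
  | rel5 =>
    simpa only [map_mul, map_zero, freeRightAction_a] using op_partialEnd_mul_eq_zero (by decide)

/-- The right action of `A = FΓ/R` on the vector space with basis the normal words. -/
def rightAction : PathAlg F →ₐ[F] (Module.End F (NormalPath →₀ F))ᵐᵒᵖ :=
  RingQuot.liftAlgHom F ⟨freeRightAction F, fun _ _ => freeRightAction_eq_of_rel F⟩

theorem rightAction_π (x : FreeAlgebra F X) : rightAction F (π F x) = freeRightAction F x :=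
  RingQuot.liftAlgHom_mkAlgHom_apply _ _ _ _

variable {F}

theorem rightAction_vtx (i : Fin 5) :
    (rightAction F (vtx i)).unop = partialEnd F (mulVertex i) := by
  rw [vtx, rightAction_π, freeRightAction_e, unop_op]

theorem rightAction_arr (k : Fin 7) :
    (rightAction F (arr k)).unop = partialEnd F (mulArrow k) := by
  rw [arr, rightAction_π, freeRightAction_a, unop_op]

theorem linearCombination_eval_partialEnd {f : NormalPath → Option NormalPath} {x : PathAlg F}
    (hf : ∀ w, w.eval * x = (f w).elim 0 eval) (v : NormalPath →₀ F) :
    Finsupp.linearCombination F eval (partialEnd F f v) =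
      Finsupp.linearCombination F eval v * x := by
  induction v using Finsupp.induction_linear with
  | zero => simp only [map_zero, zero_mul]
  | add v w hv hw => simp only [map_add, add_mul, hv, hw]
  | single w c =>
    rw [Finsupp.linearCombination_single, smul_mul_assoc, hf, ← mul_one c, ← smul_eq_mul,
      ← Finsupp.smul_single, map_smul, map_smul, partialEnd_single]
    cases f w <;> simp

theorem linearCombination_eval_rightAction (x : PathAlg F) (v : NormalPath →₀ F) :
    Finsupp.linearCombination F eval ((rightAction F x).unop v) =
      Finsupp.linearCombination F eval v * x := by
  obtain ⟨x, rfl⟩ : ∃ y, π F y = x := RingQuot.mkAlgHom_surjective F (Rel F) x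
  induction x using FreeAlgebra.induction generalizing v with
  | grade0 c =>
    simp only [Algebra.algebraMap_eq_smul_one, map_smul, map_one, unop_smul, unop_one,
      LinearMap.smul_apply, Module.End.one_apply, mul_smul_comm, mul_one]
  | grade1 x =>
    rcases x with i | k
    · rw [← e, ← vtx, rightAction_vtx, linearCombination_eval_partialEnd (eval_mul_vtx · i)]
    · rw [← a, ← arr, rightAction_arr, linearCombination_eval_partialEnd (eval_mul_arr · k)]
  | mul x y hx hy => rw [map_mul, map_mul, unop_mul, Module.End.mul_apply, hy, hx, mul_assoc]
  | add x y hx hy => rw [map_add, map_add, unop_add, LinearMap.add_apply, map_add, hx, hy, mul_add]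

/-- The coordinates of an element of `A = FΓ/R` on the normal words: its action on `1`. -/
def coordinates : PathAlg F →ₗ[F] NormalPath →₀ F :=
  LinearMap.applyₗ (∑ i, Finsupp.single (vertex i) 1) ∘ₗ
    (opLinearEquiv F).symm.toLinearMap ∘ₗ (rightAction F).toLinearMap

theorem coordinates_mul_vtx (x : PathAlg F) (i : Fin 5) :
    coordinates (x * vtx i) = partialEnd F (mulVertex i) (coordinates x) := by
  rw [← rightAction_vtx]
  simp only [coordinates, LinearMap.comp_apply, AlgHom.toLinearMap_apply, map_mul]
  rfl

theorem coordinates_mul_arr (x : PathAlg F) (k : Fin 7) :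
    coordinates (x * arr k) = partialEnd F (mulArrow k) (coordinates x) := by
  rw [← rightAction_arr]
  simp only [coordinates, LinearMap.comp_apply, AlgHom.toLinearMap_apply, map_mul]
  rfl

theorem linearCombination_eval_coordinates (x : PathAlg F) :
    Finsupp.linearCombination F eval (coordinates x) = x := by
  change Finsupp.linearCombination F eval ((rightAction F x).unop (∑ i, _)) = x
  simp only [linearCombination_eval_rightAction, map_sum, Finsupp.linearCombination_single,
    one_smul, eval]
  rw [← Finset.sum_mul, sum_vtx, one_mul]

end Coordinates

end Stmt11

/-! ### Syzygies between the arrows -/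

namespace Stmt11

open NormalPath

variable {F : Type} [Field F]

theorem eq_sum_coordinates_smul {x : PathAlg F} {i : Fin 5} (hx : x * vtx i = x)
    {S : Finset NormalPath} (hS : ∀ w, w.target = i → w ∈ S) :
    x = ∑ w ∈ S, coordinates x w • w.eval := by
  conv_lhs => rw [← linearCombination_eval_coordinates x]
  rw [Finsupp.linearCombination_apply, Finsupp.sum_of_support_subset _ _ _ (by simp)]
  intro w hw
  refine hS w (by_contra fun hne => Finsupp.mem_support_iff.1 hw ?_)
  rw [← hx, coordinates_mul_vtx, partialEnd_apply (S := ∅), Finset.sum_empty]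
  intro v
  simp only [mulVertex, Finset.notMem_empty]
  grind

theorem eq_zero_of_mul_arr_eq_zero {k : Fin 7} (hk : k ≤ 2) {x : PathAlg F}
    (hx : x * vtx (src k) = x) (h : x * arr k = 0) : x = 0 := by
  have mulArrow_inj : ∀ k : Fin 7, k ≤ 2 → ∀ w : NormalPath, w.target = src k →
      ∃ w', ∀ v, v.mulArrow k = some w' ↔ v ∈ ({w} : Finset NormalPath) := by decide
  rw [eq_sum_coordinates_smul (S := {w | w.target = src k}) hx (by simp)]
  refine Finset.sum_eq_zero fun w hw => ?_
  obtain ⟨w', hw'⟩ := mulArrow_inj k hk w (Finset.mem_filter.1 hw).2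
  rw [← Finset.sum_singleton (coordinates x) w, ← partialEnd_apply hw', ← coordinates_mul_arr,
    h, map_zero, Finsupp.zero_apply, zero_smul]

theorem eq_zero_of_mul_arr_zero_mul_arr_one {x : PathAlg F} (hx : x * vtx 0 = x)
    (h : x * (arr 0 * arr 1) = 0) : x = 0 := by
  refine eq_zero_of_mul_arr_eq_zero (k := 0) (by decide) hx
    (eq_zero_of_mul_arr_eq_zero (k := 1) (by decide) ?_ (by rw [mul_assoc, h]))
  rw [mul_assoc]
  exact congrArg (x * ·) (arr_mul_vtx_tgt 0)

/-- A relation `∑ k, y k * arr k = 0` between the arrows, where `y k` is a combination of paths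
ending at the source of the arrow `k`: an element of the kernel of `P₁ → P₀`. -/
structure IsArrSyzygy (y : Fin 7 → PathAlg F) : Prop where
  mul_vtx (k) : y k * vtx (src k) = y k
  sum_mul_arr : ∑ k, y k * arr k = 0

namespace IsArrSyzygy

variable {y : Fin 7 → PathAlg F}

theorem sum_coordinates_eq_zero (hy : IsArrSyzygy y) {w' : NormalPath}
    (P : Finset (Fin 7 × NormalPath))
    (hP : ∀ k w, w.mulArrow k = some w' ↔ (k, w) ∈ P) :
    ∑ p ∈ P, coordinates (y p.1) p.2 = 0 := by
  rw [Finset.sum_finset_product P Finset.univ (fun k => {w | (k, w) ∈ P}) (by simp),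
    ← Finsupp.zero_apply (a := w'), ← map_zero coordinates, ← hy.sum_mul_arr, map_sum,
    Finsupp.finsetSum_apply]
  refine Finset.sum_congr rfl fun k _ => ?_
  rw [coordinates_mul_arr, partialEnd_apply]
  simp [hP]

theorem coordinates_eq_zero (hy : IsArrSyzygy y) {k : Fin 7} (w w' : NormalPath)
    (hw : ∀ l v, v.mulArrow l = some w' ↔ (l, v) ∈ ({(k, w)} : Finset _)) :
    coordinates (y k) w = 0 := by
  simpa only [Finset.sum_singleton] using hy.sum_coordinates_eq_zero _ hw

theorem apply_zero (hy : IsArrSyzygy y) : y 0 = 0 := by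
  have h := eq_sum_coordinates_smul (S := {vertex 0}) (hy.mul_vtx 0) (by decide)
  rwa [Finset.sum_singleton, hy.coordinates_eq_zero (vertex 0) (arrow 0) (by decide),
    zero_smul] at h

theorem apply_one_two (hy : IsArrSyzygy y) : ∃ c, y 1 = c * arr 0 ∧ y 2 = -(c * arr 0) := by
  have expand {k} (hk : src k = 1) :
      y k = coordinates (y k) (vertex 1) • vtx 1 + coordinates (y k) (arrow 0) • arr 0 := by
    simpa [eval] using eq_sum_coordinates_smul (S := {vertex 1, arrow 0}) (hk ▸ hy.mul_vtx k)
      (by decide)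
  have path01_coeff : coordinates (y 1) (arrow 0) + coordinates (y 2) (arrow 0) = 0 := by
    simpa using hy.sum_coordinates_eq_zero (w' := path01) {(1, arrow 0), (2, arrow 0)} (by decide)
  refine ⟨coordinates (y 1) (arrow 0) • 1, ?_, ?_⟩
  · conv_lhs => rw [expand (by rfl), hy.coordinates_eq_zero (vertex 1) (arrow 1) (by decide)]
    simp
  · conv_lhs => rw [expand (by rfl), hy.coordinates_eq_zero (vertex 1) (arrow 2) (by decide)]
    simp only [eq_neg_of_add_eq_zero_right path01_coeff, zero_smul, zero_add,
      Algebra.smul_mul_assoc, one_mul]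
    module

theorem apply_three_four_five (hy : IsArrSyzygy y) :
    ∃ z z', y 3 = z * arr 1 ∧ y 4 = 0 ∧ y 5 = z' * arr 2 := by
  have expand {k} (hk : src k = 2) :
      y k = coordinates (y k) (vertex 2) • vtx 2 + coordinates (y k) (arrow 1) • arr 1 +
        coordinates (y k) (arrow 2) • arr 2 + coordinates (y k) path01 • (arr 0 * arr 1) := by
    simpa [eval, add_assoc] using eq_sum_coordinates_smul
      (S := {vertex 2, arrow 1, arrow 2, path01}) (hk ▸ hy.mul_vtx k) (by decide)
  refine ⟨coordinates (y 3) (arrow 1) • 1 + coordinates (y 3) path01 • arr 0,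
    coordinates (y 5) (arrow 2) • 1 + coordinates (y 5) path01 • arr 0, ?_, ?_, ?_⟩
  · conv_lhs => rw [expand (by rfl), hy.coordinates_eq_zero (vertex 2) (arrow 3) (by decide),
      hy.coordinates_eq_zero (arrow 2) path23 (by decide)]
    simp [add_mul]
  · rw [expand (by rfl), hy.coordinates_eq_zero (vertex 2) (arrow 4) (by decide),
      hy.coordinates_eq_zero (arrow 1) path14 (by decide),
      hy.coordinates_eq_zero (arrow 2) path24 (by decide),
      hy.coordinates_eq_zero path01 path014 (by decide)]
    simp
  · conv_lhs => rw [expand (by rfl), hy.coordinates_eq_zero (vertex 2) (arrow 5) (by decide),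
      hy.coordinates_eq_zero (arrow 1) path15 (by decide)]
    simp [add_mul, arr_zero_mul_arr_two]

theorem apply_six (hy : IsArrSyzygy y) :
    ∃ z z', y 6 = z * (arr 3 - arr 4) + z' * (arr 4 - arr 5) := by
  set c := coordinates (y 6) with hc
  have vertex_coeff : c (vertex 3) = 0 := hy.coordinates_eq_zero (vertex 3) (arrow 6) (by decide)
  have path36_coeff : c (arrow 3) + (c (arrow 4) + c (arrow 5)) = 0 := by
    simpa using hy.sum_coordinates_eq_zero (w' := path36) {(6, arrow 3), (6, arrow 4), (6, arrow 5)}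
      (by decide)
  have hc₄ : c (arrow 4) = -c (arrow 3) - c (arrow 5) := by linear_combination path36_coeff
  refine ⟨c (arrow 3) • vtx 2 - (c path15 + c path14) • arr 1 + c path23 • arr 2
      - c path014 • (arr 0 * arr 1),
    -c (arrow 5) • vtx 2 - c path15 • arr 1 + (c path24 + c path23) • arr 2, ?_⟩
  rw [eq_sum_coordinates_smul (hy.mul_vtx 6) (S := {vertex 3, arrow 3, arrow 4, arrow 5, path14,
    path15, path23, path24, path014}) (by decide), ← hc]
  simp only [eval, vertex_coeff, hc₄, add_mul, sub_mul, mul_sub, vtx_mul_arr, src,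
    arr_one_mul_arr_three, arr_two_mul_arr_five, arr_zero_mul_arr_one_mul_arr_three,
    Finset.mem_insert, Finset.mem_singleton, reduceCtorEq, arrow.injEq, Fin.reduceEq, or_self,
    not_false_eq_true, Finset.sum_insert, Finset.sum_singleton, Matrix.cons_val, ↓reduceIte,
    Algebra.smul_mul_assoc, zero_smul, smul_zero, zero_add, add_zero, sub_zero]
  module

end IsArrSyzygy

theorem exists_eq_mul_of_mul_sub_add_mul_sub_eq_zero {z z' : PathAlg F} (hz : z * vtx 2 = z)
    (hz' : z' * vtx 2 = z') (h : z * (arr 3 - arr 4) + z' * (arr 4 - arr 5) = 0) :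
    ∃ c, z = c * (arr 0 * arr 1) ∧ z' = z := by
  have hy : IsArrSyzygy ![0, 0, 0, z, z' - z, -z', 0] :=
    { mul_vtx k := by fin_cases k <;> simp [src, hz, hz', sub_mul, neg_mul z']
      sum_mul_arr := by
        refine Eq.trans ?_ h
        simp only [Fin.sum_univ_seven, Matrix.cons_val, zero_mul, neg_mul z', mul_sub, sub_mul]
        abel }
  obtain ⟨u, u', hu, hz'z, hu'⟩ :
      ∃ u u', z = u * arr 1 ∧ z' - z = 0 ∧ -z' = u' * arr 2 := hy.apply_three_four_five
  have hx : IsArrSyzygy ![0, u * vtx 1, u' * vtx 1, 0, 0, 0, 0] :=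
    { mul_vtx k := by fin_cases k <;> simp [src, mul_assoc, vtx_mul_vtx]
      sum_mul_arr := by
        have hsum : z + -z' = 0 := add_neg_eq_zero.2 (sub_eq_zero.1 hz'z).symm
        simpa [Fin.sum_univ_seven, mul_assoc, vtx_mul_arr, src, ← hu, ← hu'] using hsum }
  obtain ⟨c, hc, -⟩ : ∃ c, u * vtx 1 = c * arr 0 ∧ _ := hx.apply_one_two
  refine ⟨c, ?_, sub_eq_zero.1 hz'z⟩
  rw [hu, ← mul_assoc, ← hc, mul_assoc, vtx_mul_arr]
  rfl

end Stmt11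

/-! ### The resolution of `A₀` -/

namespace Stmt11

variable {F : Type} [Field F]

/-- The common source of the paths in each of the relations `α₁α₂ − α₁α₃`, `α₄α₇ − α₅α₇`,
`α₅α₇ − α₆α₇`, `α₂α₄`, `α₃α₆`. -/
def relSrc : Fin 5 → Fin 5 := ![0, 2, 2, 1, 1]

/-- The arrows, as the matrix of the differential `P₁ → P₀ = A`. -/
def arrMatrix : Matrix (Fin 7) (Fin 1) (PathAlg F) := Matrix.of fun k _ => arr k

/-- The matrix of the differential `P₂ → P₁`: its rows hold the coefficients of the last arrows in
the five relations. -/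
def relMatrix : Matrix (Fin 5) (Fin 7) (PathAlg F) :=
  !![0, arr 0, -arr 0, 0, 0, 0, 0;
     0, 0, 0, 0, 0, 0, arr 3 - arr 4;
     0, 0, 0, 0, 0, 0, arr 4 - arr 5;
     0, 0, 0, arr 1, 0, 0, 0;
     0, 0, 0, 0, 0, arr 2, 0]

/-- The matrix of the differential `P₃ → P₂`, which expresses the syzygy
`α₁α₂(α₄ − α₅) + α₁α₂(α₅ − α₆) = 0` between the coefficients of `α₇` in the relations. -/
def syzMatrix : Matrix (Fin 1) (Fin 5) (PathAlg F) :=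
  !![0, arr 0 * arr 1, arr 0 * arr 1, 0, 0]

theorem vtx_mul_relMatrix (i : Fin 5) (k : Fin 7) :
    vtx (relSrc i) * relMatrix i k = (relMatrix i k : PathAlg F) := by
  fin_cases i <;> fin_cases k <;>
    simp [relMatrix, relSrc, mul_sub, mul_neg (vtx _), vtx_mul_arr, src]

theorem relMatrix_mul_vtx (i : Fin 5) (k : Fin 7) :
    relMatrix i k * vtx (src k) = (relMatrix i k : PathAlg F) := by
  fin_cases i <;> fin_cases k <;>
    simp [relMatrix, src, sub_mul, neg_mul (arr _), arr_mul_vtx, tgt]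

theorem vtx_mul_syzMatrix (i : Fin 1) (j : Fin 5) :
    vtx 0 * syzMatrix i j = (syzMatrix i j : PathAlg F) := by
  fin_cases i; fin_cases j <;> simp [syzMatrix, ← mul_assoc, vtx_mul_arr, src]

theorem syzMatrix_mul_vtx (i : Fin 1) (j : Fin 5) :
    syzMatrix i j * vtx (relSrc j) = (syzMatrix i j : PathAlg F) := by
  fin_cases i; fin_cases j <;> simp [syzMatrix, relSrc, mul_assoc, arr_mul_vtx, tgt]

theorem relMatrix_mul_arrMatrix : relMatrix (F := F) * arrMatrix (F := F) = 0 := by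
  ext i j
  rw [Matrix.mul_apply, Fin.sum_univ_seven]
  fin_cases i <;>
    simp [relMatrix, arrMatrix, sub_mul, neg_mul (arr _), arr_zero_mul_arr_two,
      arr_four_mul_arr_six, arr_five_mul_arr_six, arr_one_mul_arr_three, arr_two_mul_arr_five]

theorem syzMatrix_mul_relMatrix : syzMatrix (F := F) * relMatrix (F := F) = 0 := by
  ext i k
  rw [Matrix.mul_apply, Fin.sum_univ_five]
  fin_cases i; fin_cases k <;>
    simp [relMatrix, syzMatrix, mul_sub, arr_zero_mul_arr_one_mul_arr_three,
      arr_zero_mul_arr_one_mul_arr_five]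

theorem exists_vecMul_relMatrix_eq {y : Fin 7 → PathAlg F} (hy : y ∈ projSum fun k => vtx (src k))
    (h : Matrix.vecMul y arrMatrix = 0) : ∃ x, Matrix.vecMul x relMatrix = y := by
  have hy : IsArrSyzygy y := ⟨hy, congrFun h 0⟩
  obtain ⟨c, h₁, h₂⟩ := hy.apply_one_two
  obtain ⟨z, z', h₃, h₄, h₅⟩ := hy.apply_three_four_five
  obtain ⟨u, u', h₆⟩ := hy.apply_six
  refine ⟨![c, u, u', z, z'], ?_⟩
  ext k
  rw [Matrix.vecMul_apply, dotProduct, Fin.sum_univ_five]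
  fin_cases k <;> simp [relMatrix, hy.apply_zero, h₁, h₂, h₃, h₄, h₅, h₆, mul_neg c]

theorem exists_vecMul_syzMatrix_eq {y : Fin 5 → PathAlg F}
    (hy : y ∈ projSum fun i => vtx (relSrc i)) (h : Matrix.vecMul y relMatrix = 0) :
    ∃ x, Matrix.vecMul x syzMatrix = y := by
  have column (k) : ∑ i, y i * relMatrix i k = 0 := congrFun h k
  have h₀ : y 0 = 0 := eq_zero_of_mul_arr_eq_zero (k := 0) (by decide) (hy 0) <| by
    simpa [Fin.sum_univ_five, relMatrix] using column 1
  have h₃ : y 3 = 0 := eq_zero_of_mul_arr_eq_zero (k := 1) (by decide) (hy 3) <| by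
    simpa [Fin.sum_univ_five, relMatrix] using column 3
  have h₄ : y 4 = 0 := eq_zero_of_mul_arr_eq_zero (k := 2) (by decide) (hy 4) <| by
    simpa [Fin.sum_univ_five, relMatrix] using column 5
  obtain ⟨c, h₁, h₂⟩ := exists_eq_mul_of_mul_sub_add_mul_sub_eq_zero (hy 1) (hy 2) <| by
    simpa [Fin.sum_univ_five, relMatrix] using column 6
  refine ⟨![c], ?_⟩
  ext i
  rw [Matrix.vecMul_apply, dotProduct, Fin.sum_univ_one]
  fin_cases i <;> simp [syzMatrix, h₀, h₁, h₂, h₃, h₄]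

theorem eq_zero_of_vecMul_syzMatrix_eq_zero {y : Fin 1 → PathAlg F}
    (hy : y ∈ projSum fun _ => vtx 0) (h : Matrix.vecMul y syzMatrix = 0) : y = 0 := by
  ext i
  fin_cases i
  refine eq_zero_of_mul_arr_zero_mul_arr_one (hy 0) ?_
  simpa [Matrix.vecMul_apply, dotProduct, syzMatrix] using congrFun h 1

end Stmt11

namespace Stmt11

variable {F : Type} [Field F]

/-- The number of indecomposable summands of the `n`-th term of the resolution of `A₀`. -/
def resRank : ℕ → ℕ
  | 0 => 1
  | 1 => 7
  | 2 => 5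
  | 3 => 1
  | _ + 4 => 0

/-- The idempotents generating the summands of the `n`-th term of the resolution of `A₀`. -/
def resIdem : (n : ℕ) → Fin (resRank n) → PathAlg F
  | 0, _ => 1
  | 1, k => vtx (src k)
  | 2, i => vtx (relSrc i)
  | 3, _ => vtx 0
  | _ + 4, i => i.elim0

/-- The matrices of the differentials of the resolution of `A₀`. -/
def resDiff : (n : ℕ) → Matrix (Fin (resRank (n + 1))) (Fin (resRank n)) (PathAlg F)
  | 0 => arrMatrix
  | 1 => relMatrix
  | 2 => syzMatrix
  | _ + 3 => Matrix.of fun i => i.elim0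

theorem exists_vecMul_resDiff_eq : ∀ (n : ℕ),
    ∀ y ∈ projSum (resIdem (F := F) (n + 1)), Matrix.vecMul y (resDiff n) = 0 →
      ∃ x, Matrix.vecMul x (resDiff (n + 1)) = y
  | 0, _, hy, h => exists_vecMul_relMatrix_eq hy h
  | 1, _, hy, h => exists_vecMul_syzMatrix_eq hy h
  | 2, _, hy, h =>
    ⟨0, (Matrix.zero_vecMul _).trans (eq_zero_of_vecMul_syzMatrix_eq_zero hy h).symm⟩
  | _ + 3, _, _, _ => ⟨0, funext fun i => i.elim0⟩

variable (F)

/-- The complex `0 → A e₁ → ⨁ᵣ A e_{s(r)} → ⨁ₖ A e_{s(αₖ)} → A`, where `r` runs over the relations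
and `k` over the arrows, whose augmentation is the minimal resolution of `A₀`. -/
def pathRes : MatrixResolution (PathAlg F) where
  rank := resRank
  ε := resIdem
  D := resDiff
  isIdempotentElem
    | 0, _ => mul_one 1
    | 1, _ => (vtx_mul_vtx _ _).trans (if_pos rfl)
    | 2, _ => (vtx_mul_vtx _ _).trans (if_pos rfl)
    | 3, _ => (vtx_mul_vtx _ _).trans (if_pos rfl)
    | _ + 4, i => i.elim0
  ε_mul
    | 0, k, _ => vtx_src_mul_arr k
    | 1, i, k => vtx_mul_relMatrix i k
    | 2, i, j => vtx_mul_syzMatrix i j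
    | _ + 3, i, _ => i.elim0
  mul_ε
    | 0, _, _ => mul_one _
    | 1, i, k => relMatrix_mul_vtx i k
    | 2, i, j => syzMatrix_mul_vtx i j
    | _ + 3, i, _ => i.elim0
  mul_eq_zero
    | 0 => relMatrix_mul_arrMatrix
    | 1 => syzMatrix_mul_relMatrix
    | _ + 2 => Matrix.ext fun i => i.elim0
  exact := exists_vecMul_resDiff_eq

variable {F}

theorem vtx_mem_pathGrading (i : Fin 5) : vtx i ∈ pathGrading F 0 :=
  Submodule.subset_span ⟨[.inl i], rfl, by simp [vtx, e]⟩

theorem arr_mem_pathGrading (k : Fin 7) : arr k ∈ pathGrading F 1 :=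
  Submodule.subset_span ⟨[.inr k], rfl, by simp [arr, a]⟩

theorem arr_mul_arr_mem_pathGrading (k l : Fin 7) : arr k * arr l ∈ pathGrading F 2 :=
  Submodule.subset_span ⟨[.inr k, .inr l], rfl, by simp [arr, a]⟩

theorem relMatrix_mem_pathGrading (i : Fin 5) (k : Fin 7) :
    relMatrix i k ∈ pathGrading F 1 := by
  fin_cases i <;> fin_cases k <;>
    simp [relMatrix, arr_mem_pathGrading, sub_mem]

theorem syzMatrix_mem_pathGrading (i : Fin 1) (j : Fin 5) :
    syzMatrix i j ∈ pathGrading F 2 := by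
  fin_cases i; fin_cases j <;> simp [syzMatrix, arr_mul_arr_mem_pathGrading]

theorem resIdem_mem_pathGrading : ∀ n i, resIdem n i ∈ pathGrading F 0
  | 0, _ => by
    rw [resIdem, ← sum_vtx]
    exact sum_mem fun i _ => vtx_mem_pathGrading i
  | 1, k => vtx_mem_pathGrading (src k)
  | 2, i => vtx_mem_pathGrading (relSrc i)
  | 3, _ => vtx_mem_pathGrading 0
  | _ + 4, i => i.elim0

theorem resDiff_mem_pathGrading :
    ∀ n i j, resDiff n i j ∈ pathGrading F (jump 4 3 (n + 1) - jump 4 3 n)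
  | 0, k, _ => arr_mem_pathGrading k
  | 1, i, k => relMatrix_mem_pathGrading i k
  | 2, i, j => syzMatrix_mem_pathGrading i j
  | _ + 3, i, _ => i.elim0

open NormalPath in
theorem exists_sub_mem_span_range_arr (x : PathAlg F) :
    ∃ x₀ ∈ pathGrading F 0, x - x₀ ∈ Ideal.span (Set.range arr) := by
  have arr_mem (k) : arr k ∈ Ideal.span (Set.range (arr (F := F))) :=
    Ideal.subset_span ⟨k, rfl⟩
  have eval_mem (w : NormalPath) :
      w.eval ∈ pathGrading F 0 ⊔ (Ideal.span (Set.range arr)).restrictScalars F := by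
    cases w with
    | vertex i => exact Submodule.mem_sup_left (vtx_mem_pathGrading i)
    | arrow k => exact Submodule.mem_sup_right (arr_mem k)
    | _ => exact Submodule.mem_sup_right (Ideal.mul_mem_left _ _ (arr_mem _))
  obtain ⟨x₀, hx₀, y, hy, hxy⟩ :
      ∃ x₀ ∈ pathGrading F 0, ∃ y ∈ (Ideal.span (Set.range arr)).restrictScalars F, x₀ + y = x := by
    rw [← Submodule.mem_sup, ← linearCombination_eval_coordinates x]
    exact Submodule.sum_mem _ fun w _ => Submodule.smul_mem _ _ (eval_mem w)
  exact ⟨x₀, hx₀, by rwa [← hxy, add_sub_cancel_left]⟩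

end Stmt11

namespace GradedAlg

variable {F : Type} [Field F] {𝒜 : GradedAlg F}

theorem eq_zero_of_mem_jideal_of_mem_grading_zero {x : 𝒜.A} (hx : x ∈ 𝒜.jideal)
    (hx₀ : x ∈ 𝒜.grading 0) : x = 0 := by
  rw [← DirectSum.decompose_of_mem_same 𝒜.grading hx₀]
  exact (HomogeneousIdeal.mem_irrelevant_iff 𝒜.grading x).1 hx

theorem jideal_eq_of_exists_sub_mem {I : Ideal 𝒜.A} (hI : I ≤ 𝒜.jideal)
    (h : ∀ x, ∃ x₀ ∈ 𝒜.grading 0, x - x₀ ∈ I) : 𝒜.jideal = I := by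
  refine le_antisymm (fun x hx => ?_) hI
  obtain ⟨x₀, hx₀, hsub⟩ := h x
  have hx₀_mem : x₀ ∈ 𝒜.jideal := (Submodule.sub_mem_iff_right _ hx).1 (hI hsub)
  rwa [eq_zero_of_mem_jideal_of_mem_grading_zero hx₀_mem hx₀, sub_zero] at hsub

end GradedAlg

namespace Stmt11

variable {F : Type} [Field F] {𝒜 : GradedAlg F} {f : PathAlg F ≃+* 𝒜.A}

instance : Unique (Fin (((pathRes F).map f).rank 0)) := inferInstanceAs (Unique (Fin 1))

theorem isGraded_pathRes_map (hf : ∀ n, ∀ y ∈ pathGrading F n, f y ∈ 𝒜.grading n) :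
    ((pathRes F).map f).IsGraded (jump 4 3) where
  ε_mem n i := hf _ _ (resIdem_mem_pathGrading n i)
  D_mem n i j := hf _ _ (resDiff_mem_pathGrading n i j)

theorem jideal_eq_span_range_arr (hf : ∀ n, ∀ y ∈ pathGrading F n, f y ∈ 𝒜.grading n) :
    𝒜.jideal = Ideal.span (Set.range fun k => f (arr k)) := by
  refine GradedAlg.jideal_eq_of_exists_sub_mem (Ideal.span_le.2 ?_) fun x => ?_
  · rintro _ ⟨k, rfl⟩
    exact GradedAlg.mem_jideal_of_mem_grading one_ne_zero (hf 1 _ (arr_mem_pathGrading k))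
  · obtain ⟨x₀, hx₀, hsub⟩ := exists_sub_mem_span_range_arr (f.symm x)
    refine ⟨f x₀, hf 0 _ hx₀, ?_⟩
    have hmap := Ideal.mem_map_of_mem f hsub
    rwa [Ideal.map_span, ← Set.range_comp, map_sub, f.apply_symm_apply] at hmap

theorem exists_minRes_genInDeg_jump (hf : ∀ n, ∀ y ∈ pathGrading F n, f y ∈ 𝒜.grading n)
    {T : 𝒜.GMod} (hT : GradedAlg.IsTrivialGMod T) :
    ∃ S : GradedAlg.MinRes T, ∀ n, (S.P n).GenInDeg (jump 4 3 n) :=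
  (isGraded_pathRes_map hf).exists_minRes_of_isTrivial
    (jump_strictMono (by norm_num) (by norm_num)) rfl (map_one f) (jideal_eq_span_range_arr hf) hT

end Stmt11

open GradedAlg in
/-- **Example.** The quotient `A = FΓ/R` of the path algebra of the quiver
`1 →α₁ 2 ⇉α₂,α₃ 3 ⇶α₄,α₅,α₆ 4 →α₇ 5` by the ideal generated by
`α₁α₂ − α₁α₃, α₄α₇ − α₅α₇, α₅α₇ − α₆α₇, α₂α₄, α₃α₆` is a piecewise-Koszul algebra
with `p = 3` and `d = 4`: any graded algebra whose grading corresponds to the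
path-length grading of `FΓ/R` is piecewise-Koszul with period `3` and jump degree `4`. -/
theorem pathAlg_example_isPKAlg
    (F : Type) [Field F] (𝒜 : GradedAlg F)
    (iso : 𝒜.A ≃ₐ[F] Stmt11.PathAlg F)
    (hgrading : ∀ n : ℕ,
      Submodule.map iso.toLinearMap (𝒜.grading n) = Stmt11.pathGrading F n)
    (T : 𝒜.GMod) (hT : IsTrivialGMod T) :
    𝒜.IsPKAlg 3 4 T := by
  have symm_mem (n) (y) (hy : y ∈ Stmt11.pathGrading F n) :
      iso.symm.toRingEquiv y ∈ 𝒜.grading n := by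
    obtain ⟨x, hx, rfl⟩ := hgrading n ▸ hy
    exact (iso.symm_apply_apply x).symm ▸ hx
  obtain ⟨S, hS⟩ := Stmt11.exists_minRes_genInDeg_jump symm_mem hT
  exact ⟨S, fun n => (add_zero (jump 4 3 n : ℤ)).symm ▸ hS n⟩
end
end
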